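/- arXiv:1612.01983 — 4 statements merged into one kernel-verified Lean document; each statement's English description precedes it below -/
import Mathlib

section
/- There exist a constant c > 0 and h_0 ∈ ℕ such that for all integers h ≥ h_0 and every integer k with h − 2√h ≤ k ≤ h − √h, if Z_0 = k then E[ Σ_{t=1}^{τ_h} (h − Z_t)/h ] ≥ c √h. -/
open MeasureTheory ProbabilityTheory

/-!
Freeze the chain on its first entrance into `[h, ∞)` and call the frozen chain `W`. Each step of
`Z` maps `z` to a sum `S` of `z + 1` geometric variables, whose moments are polynomials in `z`:
`E[S choose r] = (z + r) choose r`. Hence there is a cubic `V` with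
`V(z) - E[V(S)] = (h - 1 - z) (h - z)`, and for `0 ≤ z < h` this is at most `h (h - 1 - z)`, that
is, `h` times the expected contribution `h - S` of the step to `∑_{t ≤ τ} (h - Z_t)`. Summing along
`W` bounds `h E[∑_{t ≤ τ} (h - Z_t)]` from below by `V(k) - lim E[V(W_n)]`. Since `V ≤ V(h)` on
`[h, ∞)`, overshooting the level can only help, so the bound is at least `V(k) - V(h)`, which is
at least `h² (h - k) / 4`.
-/

section GeometricSums

variable {Ω : Type*} [MeasurableSpace Ω] {μ : Measure Ω} {p : unitInterval}

theorem hasSum_geometric_mul_choose (hp : p ≠ 0) (r : ℕ) :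
    HasSum (fun n : ℕ => (1 - p : ℝ) ^ n * p * (n.choose r : ℝ)) (((1 - p) / p : ℝ) ^ r) := by
  have hp0 : (0 : ℝ) < p := unitInterval.pos_iff_ne_zero.2 hp
  have hnorm : ‖(1 - p : ℝ)‖ < 1 := by
    rw [Real.norm_of_nonneg (sub_nonneg.2 p.2.2)]
    linarith
  rw [← hasSum_nat_add_iff' r, Finset.sum_eq_zero fun n hn => by
    simp [Nat.choose_eq_zero_of_lt (Finset.mem_range.1 hn)], sub_zero]
  convert! (hasSum_choose_mul_geometric_of_norm_lt_one r hnorm).mul_left ((1 - p : ℝ) ^ r * p)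
    using 1
  · ext n
    ring
  · rw [sub_sub_cancel, div_pow, pow_succ]
    field_simp

theorem integrable_choose_geometricMeasure (hp : p ≠ 0) (r : ℕ) :
    Integrable (fun n : ℕ => (n.choose r : ℝ)) (geometricMeasure p) := by
  simpa [integrable_geometricMeasure_iff hp] using (hasSum_geometric_mul_choose hp r).summable

theorem integral_choose_geometricMeasure (hp : p ≠ 0) (r : ℕ) :
    ∫ n, (n.choose r : ℝ) ∂geometricMeasure p = ((1 - p) / p : ℝ) ^ r := by
  simpa [integral_geometricMeasure hp] using (hasSum_geometric_mul_choose hp r).tsum_eq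

theorem hasLaw_geometricMeasure {Y : Ω → ℕ} (hY : Measurable Y) (hp : p ≠ 0)
    (hlaw : ∀ j, μ {ω | Y ω = j} = ENNReal.ofReal ((1 - p) ^ j * p)) :
    HasLaw Y (geometricMeasure p) μ where
  aemeasurable := hY.aemeasurable
  map_eq := Measure.ext_of_singleton fun j => by
    rw [Measure.map_apply hY (measurableSet_singleton j), geometricMeasure_singleton hp]
    exact hlaw j

theorem integrable_choose_of_hasLaw_geometricMeasure {Y : Ω → ℕ} (hp : p ≠ 0)
    (hY : HasLaw Y (geometricMeasure p) μ) (r : ℕ) :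
    Integrable (fun ω => ((Y ω).choose r : ℝ)) μ := by
  have h := integrable_choose_geometricMeasure hp r
  rw [← hY.map_eq] at h
  exact h.comp_aemeasurable hY.aemeasurable

theorem integral_choose_of_hasLaw_geometricMeasure {Y : Ω → ℕ} (hp : p ≠ 0)
    (hY : HasLaw Y (geometricMeasure p) μ) (r : ℕ) :
    ∫ ω, ((Y ω).choose r : ℝ) ∂μ = ((1 - p) / p : ℝ) ^ r :=
  (hY.integral_comp (measurable_of_countable _).aestronglyMeasurable).trans
    (integral_choose_geometricMeasure hp r)

theorem integrable_and_integral_choose_add {Y Y' : Ω → ℕ} (hind : IndepFun Y Y' μ)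
    (hY : ∀ r, Integrable (fun ω => ((Y ω).choose r : ℝ)) μ)
    (hY' : ∀ r, Integrable (fun ω => ((Y' ω).choose r : ℝ)) μ) (r : ℕ) :
    Integrable (fun ω => ((Y ω + Y' ω).choose r : ℝ)) μ ∧
      ∫ ω, ((Y ω + Y' ω).choose r : ℝ) ∂μ = ∑ ij ∈ Finset.HasAntidiagonal.antidiagonal r,
        (∫ ω, ((Y ω).choose ij.1 : ℝ) ∂μ) * ∫ ω, ((Y' ω).choose ij.2 : ℝ) ∂μ := by
  have hind' (i j : ℕ) :
      IndepFun (fun ω => ((Y ω).choose i : ℝ)) (fun ω => ((Y' ω).choose j : ℝ)) μ :=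
    hind.comp (φ := fun n : ℕ => (n.choose i : ℝ)) (ψ := fun n : ℕ => (n.choose j : ℝ))
      (measurable_of_countable _) (measurable_of_countable _)
  have hint (ij : ℕ × ℕ) :
      Integrable (fun ω => ((Y ω).choose ij.1 : ℝ) * ((Y' ω).choose ij.2 : ℝ)) μ :=
    (hind' ij.1 ij.2).integrable_mul (hY ij.1) (hY' ij.2)
  simp only [Nat.add_choose_eq, Nat.cast_sum, Nat.cast_mul]
  refine ⟨integrable_finsetSum _ fun ij _ => hint ij, ?_⟩
  rw [integral_finsetSum _ fun ij _ => hint ij]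
  exact Finset.sum_congr rfl fun ij _ =>
    (hind' ij.1 ij.2).integral_fun_mul_eq_mul_integral (hY ij.1).1 (hY' ij.2).1

theorem integrable_and_integral_choose_sum_geometric {ξ : ℕ → Ω → ℕ} (hp : p ≠ 0)
    (hmeas : ∀ i, Measurable (ξ i)) (hind : iIndepFun ξ μ)
    (hlaw : ∀ i, HasLaw (ξ i) (geometricMeasure p) μ) (z r : ℕ) :
    Integrable (fun ω => ((∑ i ∈ Finset.range (z + 1), ξ i ω).choose r : ℝ)) μ ∧
      ∫ ω, ((∑ i ∈ Finset.range (z + 1), ξ i ω).choose r : ℝ) ∂μ =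
        ((z + r).choose r : ℝ) * ((1 - p) / p : ℝ) ^ r := by
  have hξ (i r : ℕ) := integrable_choose_of_hasLaw_geometricMeasure hp (hlaw i) r
  have hξ' (i r : ℕ) := integral_choose_of_hasLaw_geometricMeasure hp (hlaw i) r
  induction z generalizing r with
  | zero => simpa using ⟨hξ 0 r, hξ' 0 r⟩
  | succ z ih =>
    have hind_succ : IndepFun (fun ω => ∑ i ∈ Finset.range (z + 1), ξ i ω) (ξ (z + 1)) μ := by
      simpa only [Finset.sum_fn] using hind.indepFun_sum_range_succ hmeas (z + 1)
    have hadd := integrable_and_integral_choose_add hind_succ (fun r => (ih r).1) (hξ (z + 1)) r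
    simp only [Finset.sum_range_succ _ (z + 1)]
    refine ⟨hadd.1, hadd.2.trans ?_⟩
    have hockey : (∑ i ∈ Finset.range (r + 1), (z + i).choose i) = (z + 1 + r).choose r := by
      have := Nat.sum_range_add_choose r z
      rw [show z + 1 + r = r + z + 1 by ring, Nat.choose_symm_of_eq_add (b := z + 1) (by ring),
        ← this]
      exact Finset.sum_congr rfl fun i _ => by rw [add_comm, Nat.choose_symm_add]
    rw [← hockey, Nat.cast_sum, Finset.sum_mul, ← Finset.Nat.sum_antidiagonal_eq_sum_range_succ
      (fun i _ => ((z + i).choose i : ℝ) * ((1 - p) / p : ℝ) ^ r)]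
    refine Finset.sum_congr rfl fun ij hij => ?_
    rw [(ih ij.1).2, hξ', ← Finset.HasAntidiagonal.mem_antidiagonal.1 hij, pow_add, mul_assoc]

end GeometricSums

section RandomIndex

variable {Ω : Type*} [MeasurableSpace Ω] {μ : Measure Ω}

theorem measurable_random_index {E : Type*} [MeasurableSpace E] {N : Ω → ℕ} {Y : ℕ → Ω → E}
    (hN : Measurable N) (hY : ∀ n, Measurable (Y n)) : Measurable fun ω => Y (N ω) ω :=
  (measurable_from_prod_countable_right (f := fun q : ℕ × Ω => Y q.1 q.2) hY).comp
    (hN.prodMk measurable_id)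

theorem integrableOn_and_setIntegral_random_index [IsFiniteMeasure μ] {N : Ω → ℕ}
    {Y : ℕ → Ω → ℝ} (hN : Measurable N)
    (hind : ∀ z, IndepFun N (Y z) μ) (hint : ∀ z, Integrable (Y z) μ) (h : ℕ) :
    IntegrableOn (fun ω => Y (N ω) ω) {ω | N ω < h} μ ∧
      ∫ ω in {ω | N ω < h}, Y (N ω) ω ∂μ =
        ∫ ω in {ω | N ω < h}, (∫ ω', Y (N ω) ω' ∂μ) ∂μ := by
  have hset : {ω | N ω < h} = ⋃ z ∈ Finset.range h, {ω | N ω = z} := by ext; simp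
  have hmeas (z : ℕ) : MeasurableSet {ω | N ω = z} := hN (measurableSet_singleton z)
  have hdisj : Set.Pairwise ↑(Finset.range h) (Function.onFun Disjoint fun z => {ω | N ω = z}) :=
    fun z _ z' _ hne => Set.disjoint_left.2 fun ω hz hz' => hne (hz.symm.trans hz')
  have hint_fiber (z : ℕ) : IntegrableOn (fun ω => Y (N ω) ω) {ω | N ω = z} μ :=
    (hint z).integrableOn.congr_fun (fun ω hω => by rw [hω]) (hmeas z)
  have hconst_fiber (z : ℕ) :
      IntegrableOn (fun ω => ∫ ω', Y (N ω) ω' ∂μ) {ω | N ω = z} μ :=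
    (integrableOn_const (C := ∫ ω', Y z ω' ∂μ)).congr_fun (fun ω hω => by rw [hω]) (hmeas z)
  rw [hset]
  refine ⟨integrableOn_finset_iUnion.2 fun z _ => hint_fiber z, ?_⟩
  rw [integral_biUnion_finset _ (fun z _ => hmeas z) hdisj fun z _ => hint_fiber z,
    integral_biUnion_finset _ (fun z _ => hmeas z) hdisj fun z _ => hconst_fiber z]
  refine Finset.sum_congr rfl fun z _ => ?_
  calc ∫ ω in {ω | N ω = z}, Y (N ω) ω ∂μ
      = ∫ ω in {ω | N ω = z}, Y z ω ∂μ :=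
        setIntegral_congr_fun (hmeas z) fun ω hω => by rw [hω]
    _ = ∫ _ω in {ω | N ω = z}, (∫ ω', Y z ω' ∂μ) ∂μ := by
        rw [setIntegral_const, smul_eq_mul]
        exact ((IndepFun_iff_Indep _ _ _).1 (hind z)).setIntegral_eq_mul hN.comap_le
          (hint z).1.aemeasurable ⟨{z}, measurableSet_singleton z, rfl⟩
          aestronglyMeasurable_id
    _ = ∫ ω in {ω | N ω = z}, (∫ ω', Y (N ω) ω' ∂μ) ∂μ :=
        setIntegral_congr_fun (hmeas z) fun ω hω => by rw [hω]

end RandomIndex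

section FrozenProcess

variable {Ω : Type*} {h n : ℕ} {Z : ℕ → Ω → ℕ} {ω : Ω}

/-- The process `Z` frozen from its first entrance into `[h, ∞)` on, that is `Z_{n ∧ τ_h}`. -/
def frozenAt (h : ℕ) (Z : ℕ → Ω → ℕ) : ℕ → Ω → ℕ
  | 0, ω => Z 0 ω
  | n + 1, ω => if frozenAt h Z n ω < h then Z (n + 1) ω else frozenAt h Z n ω

theorem frozenAt_succ_of_lt (hlt : frozenAt h Z n ω < h) :
    frozenAt h Z (n + 1) ω = Z (n + 1) ω :=
  if_pos hlt

theorem frozenAt_succ_of_not_lt (hlt : ¬frozenAt h Z n ω < h) :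
    frozenAt h Z (n + 1) ω = frozenAt h Z n ω :=
  if_neg hlt

theorem frozenAt_eq_of_lt (hlt : frozenAt h Z n ω < h) : frozenAt h Z n ω = Z n ω := by
  cases n with
  | zero => rfl
  | succ n =>
    by_cases hn : frozenAt h Z n ω < h
    · exact frozenAt_succ_of_lt hn
    · exact absurd (frozenAt_succ_of_not_lt hn ▸ hlt) hn

theorem frozenAt_lt_iff : frozenAt h Z n ω < h ↔ ∀ m ≤ n, Z m ω < h := by
  induction n with
  | zero => simp [frozenAt]
  | succ n ih =>
    simp only [Nat.le_succ_iff, or_imp, forall_and, forall_eq, ← ih]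
    by_cases hn : frozenAt h Z n ω < h
    · simp [hn, frozenAt_succ_of_lt hn]
    · simp [hn, frozenAt_succ_of_not_lt hn]

theorem frozenAt_lt_iff_lt_sInf (hhit : ∃ t, h ≤ Z t ω) :
    frozenAt h Z n ω < h ↔ n < sInf {t | h ≤ Z t ω} := by
  rw [frozenAt_lt_iff, ← not_iff_not]
  push Not
  exact ⟨fun ⟨m, hmn, hm⟩ => (Nat.sInf_le (s := {t | h ≤ Z t ω}) hm).trans hmn,
    fun hn => ⟨_, hn, Nat.sInf_mem (s := {t | h ≤ Z t ω}) hhit⟩⟩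

theorem tsum_frozenAt_eq_sum_Icc (φ : ℕ → ℝ) (hhit : ∃ t, h ≤ Z t ω) :
    ∑' n, {ω | frozenAt h Z n ω < h}.indicator (fun ω => φ (frozenAt h Z (n + 1) ω)) ω =
      ∑ t ∈ Finset.Icc 1 (sInf {t | h ≤ Z t ω}), φ (Z t ω) := by
  rw [tsum_eq_sum (s := Finset.range (sInf {t | h ≤ Z t ω})) fun n hn => Set.indicator_of_notMem
      (by simpa [frozenAt_lt_iff_lt_sInf hhit] using hn) _, Finset.range_eq_Ico,
    ← Finset.Ico_add_one_right_eq_Icc, ← Finset.sum_Ico_add' _ 0 _ 1]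
  refine Finset.sum_congr rfl fun n hn => ?_
  have hlt : frozenAt h Z n ω < h := (frozenAt_lt_iff_lt_sInf hhit).2 (Finset.mem_Ico.1 hn).2
  rw [Set.indicator_of_mem (show ω ∈ {ω | frozenAt h Z n ω < h} from hlt), frozenAt_succ_of_lt hlt]

end FrozenProcess

section OffspringSigma

variable {Ω : Type*} {X : ℕ → ℕ → Ω → ℕ}

/-- The σ-algebra generated by the offspring numbers of the generations in `s`. -/
abbrev offspringSigma (X : ℕ → ℕ → Ω → ℕ) (s : Set ℕ) : MeasurableSpace Ω :=
  ⨆ p ∈ Prod.fst ⁻¹' s, MeasurableSpace.comap (X p.1 p.2) inferInstance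

theorem measurable_offspringSigma {s : Set ℕ} {t : ℕ} (ht : t ∈ s) (i : ℕ) :
    Measurable[offspringSigma X s] (X t i) :=
  measurable_iff_comap_le.2 <|
    le_iSup₂_of_le (f := fun p : ℕ × ℕ => fun _ : p ∈ Prod.fst ⁻¹' s =>
      MeasurableSpace.comap (X p.1 p.2) inferInstance) (t, i) ht le_rfl

theorem measurable_sum_offspringSigma {s : Set ℕ} {t : ℕ} (ht : t ∈ s) (m : ℕ) :
    Measurable[offspringSigma X s] fun ω => ∑ i ∈ Finset.range m, X t i ω :=
  Finset.measurable_fun_sum (m := offspringSigma X s) _ fun i _ =>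
    measurable_offspringSigma (X := X) ht i

theorem offspringSigma_mono {s s' : Set ℕ} (hs : s ⊆ s') :
    offspringSigma X s ≤ offspringSigma X s' :=
  biSup_mono fun _ hp => hs hp

end OffspringSigma

section Dynkin

variable {Ω : Type*} [MeasurableSpace Ω] {μ : Measure Ω} {X : ℕ → ℕ → Ω → ℕ} {k : ℕ}
  {Z : ℕ → Ω → ℕ} {f g : ℕ → ℝ}

/-- `Z` is the branching process started from `k` with one immigrant per generation, in which the
`i`-th parent in generation `t` has `X t i` children. The offspring numbers are independent; their
laws are left unspecified. -/
structure IsBranchingWithImmigration (μ : Measure Ω) (X : ℕ → ℕ → Ω → ℕ) (k : ℕ)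
    (Z : ℕ → Ω → ℕ) : Prop where
  measurable_offspring : ∀ t i, Measurable (X t i)
  iIndepFun_offspring : iIndepFun (fun p : ℕ × ℕ => X p.1 p.2) μ
  zero : ∀ ω, Z 0 ω = k
  succ : ∀ t ω, Z (t + 1) ω = ∑ i ∈ Finset.range (Z t ω + 1), X t i ω

/-- The transition operator of the branching process with immigration maps `f` to `g`:
`E[f(Z_{t+1}) | Z_t = z] = g z`, and this expectation exists. -/
def HasOneStepMean (μ : Measure Ω) (X : ℕ → ℕ → Ω → ℕ) (f g : ℕ → ℝ) : Prop :=
  ∀ t z, Integrable (fun ω => f (∑ i ∈ Finset.range (z + 1), X t i ω)) μ ∧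
    ∫ ω, f (∑ i ∈ Finset.range (z + 1), X t i ω) ∂μ = g z

namespace IsBranchingWithImmigration

theorem offspringSigma_le (hZ : IsBranchingWithImmigration μ X k Z) (s : Set ℕ) :
    offspringSigma X s ≤ ‹MeasurableSpace Ω› :=
  iSup₂_le fun p _ => (hZ.measurable_offspring p.1 p.2).comap_le

theorem indep_offspringSigma (hZ : IsBranchingWithImmigration μ X k Z) {s s' : Set ℕ}
    (hs : Disjoint s s') : Indep (offspringSigma X s) (offspringSigma X s') μ :=
  indep_iSup_of_disjoint
    (m := fun p : ℕ × ℕ => MeasurableSpace.comap (X p.1 p.2) inferInstance)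
    (fun p => (hZ.measurable_offspring p.1 p.2).comap_le)
    hZ.iIndepFun_offspring.iIndep (hs.preimage Prod.fst)

theorem frozenAt_succ (hZ : IsBranchingWithImmigration μ X k Z) {h n : ℕ} {ω : Ω}
    (hlt : frozenAt h Z n ω < h) :
    frozenAt h Z (n + 1) ω = ∑ i ∈ Finset.range (frozenAt h Z n ω + 1), X n i ω := by
  rw [frozenAt_succ_of_lt hlt, hZ.succ, frozenAt_eq_of_lt hlt]

theorem measurable_frozenAt_offspringSigma (hZ : IsBranchingWithImmigration μ X k Z) (h n : ℕ) :
    Measurable[offspringSigma X (Set.Iio n)] (frozenAt h Z n) := by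
  induction n with
  | zero =>
    simp only [show frozenAt h Z 0 = fun _ => k from funext hZ.zero]
    exact measurable_const
  | succ n ih =>
    have hw : Measurable[offspringSigma X (Set.Iio (n + 1))] (frozenAt h Z n) :=
      ih.mono (offspringSigma_mono (Set.Iio_subset_Iio n.le_succ)) le_rfl
    have hnext : Measurable[offspringSigma X (Set.Iio (n + 1))]
        fun ω => ∑ i ∈ Finset.range (frozenAt h Z n ω + 1), X n i ω :=
      @measurable_random_index Ω (offspringSigma X (Set.Iio (n + 1))) _ _ _
        (fun z ω => ∑ i ∈ Finset.range (z + 1), X n i ω) hw fun z =>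
        measurable_sum_offspringSigma (Set.mem_Iio.2 n.lt_succ_self) (z + 1)
    have hsucc : frozenAt h Z (n + 1) = fun ω => if frozenAt h Z n ω < h then
        ∑ i ∈ Finset.range (frozenAt h Z n ω + 1), X n i ω else frozenAt h Z n ω := by
      ext ω
      split_ifs with hlt
      · exact hZ.frozenAt_succ hlt
      · exact frozenAt_succ_of_not_lt hlt
    rw [hsucc]
    exact Measurable.ite (hw measurableSet_Iio) hnext hw

theorem measurable_frozenAt (hZ : IsBranchingWithImmigration μ X k Z) (h n : ℕ) :
    Measurable (frozenAt h Z n) :=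
  (hZ.measurable_frozenAt_offspringSigma h n).mono (hZ.offspringSigma_le _) le_rfl

theorem measurableSet_frozenAt_lt (hZ : IsBranchingWithImmigration μ X k Z) (h n : ℕ) :
    MeasurableSet {ω | frozenAt h Z n ω < h} :=
  hZ.measurable_frozenAt h n measurableSet_Iio

theorem indepFun_frozenAt_offspring (hZ : IsBranchingWithImmigration μ X k Z) (h n z : ℕ) :
    IndepFun (frozenAt h Z n) (fun ω => ∑ i ∈ Finset.range (z + 1), X n i ω) μ := by
  have hsum : Measurable[offspringSigma X {n}] fun ω => ∑ i ∈ Finset.range (z + 1), X n i ω :=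
    measurable_sum_offspringSigma (Set.mem_singleton n) (z + 1)
  have hpast : Disjoint (Set.Iio n) {n} := by simp
  rw [IndepFun_iff_Indep]
  exact indep_of_indep_of_le_left (indep_of_indep_of_le_right
    (hZ.indep_offspringSigma hpast) hsum.comap_le)
    (hZ.measurable_frozenAt_offspringSigma h n).comap_le

variable [IsProbabilityMeasure μ]

theorem integrableOn_frozenAt_lt (hZ : IsBranchingWithImmigration μ X k Z) (φ : ℕ → ℝ) (h n : ℕ) :
    IntegrableOn (fun ω => φ (frozenAt h Z n ω)) {ω | frozenAt h Z n ω < h} μ :=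
  (integrableOn_and_setIntegral_random_index (Y := fun z _ => φ z) (hZ.measurable_frozenAt h n)
    (fun z => indepFun_const_right _ (φ z)) (fun z => integrable_const (φ z)) h).1

theorem integrableOn_and_setIntegral_frozenAt_succ (hZ : IsBranchingWithImmigration μ X k Z)
    (hfg : HasOneStepMean μ X f g) (h n : ℕ) :
    IntegrableOn (fun ω => f (frozenAt h Z (n + 1) ω)) {ω | frozenAt h Z n ω < h} μ ∧
      ∫ ω in {ω | frozenAt h Z n ω < h}, f (frozenAt h Z (n + 1) ω) ∂μ =
        ∫ ω in {ω | frozenAt h Z n ω < h}, g (frozenAt h Z n ω) ∂μ := by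
  have hind (z : ℕ) :
      IndepFun (frozenAt h Z n) (fun ω => f (∑ i ∈ Finset.range (z + 1), X n i ω)) μ :=
    (hZ.indepFun_frozenAt_offspring h n z).comp measurable_id (measurable_of_countable f)
  have hstep := integrableOn_and_setIntegral_random_index (hZ.measurable_frozenAt h n) hind
    (fun z => (hfg n z).1) h
  have hcongr : Set.EqOn (fun ω => f (∑ i ∈ Finset.range (frozenAt h Z n ω + 1), X n i ω))
      (fun ω => f (frozenAt h Z (n + 1) ω)) {ω | frozenAt h Z n ω < h} :=
    fun ω hlt => congrArg f (hZ.frozenAt_succ hlt).symm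
  have hmeas := hZ.measurableSet_frozenAt_lt h n
  refine ⟨hstep.1.congr_fun hcongr hmeas, ?_⟩
  rw [← setIntegral_congr_fun hmeas hcongr, hstep.2]
  exact integral_congr_ae <| .of_forall fun ω => (hfg n _).2

theorem integrable_and_integral_frozenAt (hZ : IsBranchingWithImmigration μ X k Z)
    (hfg : HasOneStepMean μ X f g) (h n : ℕ) :
    Integrable (fun ω => f (frozenAt h Z n ω)) μ ∧
      ∫ ω, f (frozenAt h Z n ω) ∂μ = f k + ∑ t ∈ Finset.range n,
        ∫ ω in {ω | frozenAt h Z t ω < h}, (g (frozenAt h Z t ω) - f (frozenAt h Z t ω)) ∂μ := by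
  induction n with
  | zero => simp [frozenAt, hZ.zero]
  | succ n ih =>
    have hstep := hZ.integrableOn_and_setIntegral_frozenAt_succ hfg h n
    have hincr_zero : ∀ ω ∉ {ω | frozenAt h Z n ω < h},
        f (frozenAt h Z (n + 1) ω) - f (frozenAt h Z n ω) = 0 := fun ω hω => by
      rw [frozenAt_succ_of_not_lt hω, sub_self]
    have hincr_int : Integrable
        (fun ω => f (frozenAt h Z (n + 1) ω) - f (frozenAt h Z n ω)) μ :=
      (integrableOn_iff_integrable_of_support_subset
        (Function.support_subset_iff'.2 hincr_zero)).1 (hstep.1.sub ih.1.integrableOn)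
    have hsucc_int : Integrable (fun ω => f (frozenAt h Z (n + 1) ω)) μ :=
      (hincr_int.add ih.1).congr (.of_forall fun ω => sub_add_cancel _ _)
    refine ⟨hsucc_int, ?_⟩
    have hincr : ∫ ω, f (frozenAt h Z (n + 1) ω) ∂μ - ∫ ω, f (frozenAt h Z n ω) ∂μ =
        ∫ ω in {ω | frozenAt h Z n ω < h},
          (g (frozenAt h Z n ω) - f (frozenAt h Z n ω)) ∂μ := by
      rw [← integral_sub hsucc_int ih.1, ← setIntegral_eq_integral_of_forall_compl_eq_zero
        hincr_zero, integral_sub hstep.1 ih.1.integrableOn, hstep.2,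
        integral_sub (hZ.integrableOn_frozenAt_lt g h n) ih.1.integrableOn]
    rw [Finset.sum_range_succ, ← add_assoc, ← ih.2, ← hincr, add_sub_cancel]

/-- The Foster–Lyapunov bound on the expected hitting time of `[h, ∞)`. -/
theorem sum_measureReal_frozenAt_lt_le (hZ : IsBranchingWithImmigration μ X k Z)
    (hfg : HasOneStepMean μ X f g) {h : ℕ} {m : ℝ} (hm : ∀ z, m ≤ f z)
    (hdrift : ∀ z < h, g z - f z ≤ -1) (n : ℕ) :
    ∑ t ∈ Finset.range n, μ.real {ω | frozenAt h Z t ω < h} ≤ f k - m := by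
  have hdynkin := hZ.integrable_and_integral_frozenAt hfg h n
  have hlower : m ≤ ∫ ω, f (frozenAt h Z n ω) ∂μ := by
    simpa using integral_mono (integrable_const m) hdynkin.1 fun ω => hm _
  have hincr (t : ℕ) : ∫ ω in {ω | frozenAt h Z t ω < h},
      (g (frozenAt h Z t ω) - f (frozenAt h Z t ω)) ∂μ ≤ -μ.real {ω | frozenAt h Z t ω < h} := by
    simpa using setIntegral_mono_on (hZ.integrableOn_frozenAt_lt (fun z => g z - f z) h t)
      (integrableOn_const (C := (-1 : ℝ))) (hZ.measurableSet_frozenAt_lt h t)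
      fun ω hω => hdrift _ hω
  have hsum := Finset.sum_le_sum fun t (_ : t ∈ Finset.range n) => hincr t
  rw [Finset.sum_neg_distrib] at hsum
  linarith [hdynkin.2]

end IsBranchingWithImmigration

end Dynkin

section Potential

/-- The solution of the Poisson equation `E[V(S)] - V(z) = -(h - 1 - z) * (h - z)`, where `S` is a
sum of `z + 1` geometric variables of mean one. -/
noncomputable def potential (h z : ℝ) : ℝ :=
  -1 / 9 * z ^ 3 + (h / 2 + 1 / 3) * z ^ 2 + (4 / 9 - h / 2 - h ^ 2) * z

/-- The divided difference `(potential h z - potential h h) / (h - z)`, as a polynomial. -/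
noncomputable def potentialSlope (h z : ℝ) : ℝ :=
  z ^ 2 / 9 - (7 * h / 18 + 1 / 3) * z + 11 * h ^ 2 / 18 + h / 6 - 4 / 9

theorem potential_sub_potential_self (h z : ℝ) :
    potential h z - potential h h = (h - z) * potentialSlope h z := by
  unfold potential potentialSlope
  ring

theorem sq_div_four_le_potentialSlope {h : ℝ} (hh : 22 ≤ h) (z : ℝ) :
    h ^ 2 / 4 ≤ potentialSlope h z := by
  unfold potentialSlope
  -- The minimum over `z` of the difference of the two sides is `(h² - 20h - 100/3) / 48`.
  nlinarith [sq_nonneg (z - (7 * h / 4 + 3 / 2))]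

theorem sub_mul_le_potential_sub {h z : ℝ} (hh : 22 ≤ h) (hz : z ≤ h) :
    (h - z) * (h ^ 2 / 4) ≤ potential h z - potential h h := by
  rw [potential_sub_potential_self]
  exact mul_le_mul_of_nonneg_left (sq_div_four_le_potentialSlope hh z) (sub_nonneg.2 hz)

theorem potential_le_potential_self {h z : ℝ} (hh : 22 ≤ h) (hz : h ≤ z) :
    potential h z ≤ potential h h := by
  have hslope := sq_div_four_le_potentialSlope hh z
  rw [← sub_nonpos, potential_sub_potential_self]
  exact mul_nonpos_of_nonpos_of_nonneg (sub_nonpos.2 hz) (by nlinarith)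

theorem potential_sub_le {h z : ℝ} (hz0 : 0 ≤ z) (hz : z ≤ h) :
    potential h z - potential h h ≤ h ^ 3 := by
  rw [potential_sub_potential_self]
  have hslope : potentialSlope h z ≤ h ^ 2 := by
    unfold potentialSlope
    nlinarith [mul_nonneg hz0 (sub_nonneg.2 hz), sq_nonneg (h - 3 / 14)]
  calc _ ≤ (h - z) * h ^ 2 := mul_le_mul_of_nonneg_left hslope (sub_nonneg.2 hz)
    _ ≤ h ^ 3 := by nlinarith [mul_nonneg hz0 (sq_nonneg h)]

end Potential

section CriticalGeometric

variable {Ω : Type*} [MeasurableSpace Ω] {μ : Measure Ω} {X : ℕ → ℕ → Ω → ℕ} {k : ℕ}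
  {Z : ℕ → Ω → ℕ} {p : unitInterval}

theorem HasOneStepMean.const_mul {f g : ℕ → ℝ} (hfg : HasOneStepMean μ X f g) (c : ℝ) :
    HasOneStepMean μ X (fun z => c * f z) (fun z => c * g z) := fun t z =>
  ⟨(hfg t z).1.const_mul c, by rw [integral_const_mul, (hfg t z).2]⟩

theorem HasOneStepMean.add {f g f' g' : ℕ → ℝ} (hfg : HasOneStepMean μ X f g)
    (hfg' : HasOneStepMean μ X f' g') :
    HasOneStepMean μ X (fun z => f z + f' z) (fun z => g z + g' z) := fun t z =>
  ⟨(hfg t z).1.add (hfg' t z).1, by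
    rw [integral_add (hfg t z).1 (hfg' t z).1, (hfg t z).2, (hfg' t z).2]⟩

namespace IsBranchingWithImmigration

theorem hasOneStepMean_choose (hZ : IsBranchingWithImmigration μ X k Z) (hp : p ≠ 0)
    (hlaw : ∀ t i, HasLaw (X t i) (geometricMeasure p) μ) (r : ℕ) :
    HasOneStepMean μ X (fun z => (z.choose r : ℝ))
      (fun z => ((z + r).choose r : ℝ) * ((1 - p) / p : ℝ) ^ r) := fun t z =>
  integrable_and_integral_choose_sum_geometric hp (hZ.measurable_offspring t)
    (hZ.iIndepFun_offspring.precomp (g := fun i => (t, i)) (Prod.mk_right_injective t))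
    (hlaw t) z r

theorem hasOneStepMean_cubic (hZ : IsBranchingWithImmigration μ X k Z) (hp : (p : ℝ) = 1 / 2)
    (hlaw : ∀ t i, HasLaw (X t i) (geometricMeasure p) μ) (a b c d : ℝ) :
    HasOneStepMean μ X (fun z => a * z ^ 3 + b * z ^ 2 + c * z + d) (fun z =>
      a * (z ^ 3 + 9 * z ^ 2 + 21 * z + 13) + b * (z ^ 2 + 4 * z + 3) + c * (z + 1) + d) := by
  have hp0 : p ≠ 0 := unitInterval.coe_ne_zero.1 (by rw [hp]; norm_num)
  have hchoose (r : ℕ) := hZ.hasOneStepMean_choose hp0 hlaw r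
  have hthree (z : ℕ) : (z.choose 3 : ℝ) = z * (z - 1) * (z - 2) / 6 := by
    simp [Nat.cast_choose_eq_descPochhammer_div, descPochhammer_succ_eval, Nat.factorial]
  convert! ((((hchoose 3).const_mul (6 * a)).add ((hchoose 2).const_mul (6 * a + 2 * b))).add
    ((hchoose 1).const_mul (a + b + c))).add ((hchoose 0).const_mul d) using 2 with z z
  · rw [hthree, Nat.cast_choose_two, Nat.choose_one_right, Nat.choose_zero_right]
    push_cast
    ring
  · rw [hp, hthree, Nat.cast_choose_two, Nat.choose_one_right, Nat.choose_zero_right]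
    push_cast
    ring

theorem hasOneStepMean_potential (hZ : IsBranchingWithImmigration μ X k Z)
    (hp : (p : ℝ) = 1 / 2) (hlaw : ∀ t i, HasLaw (X t i) (geometricMeasure p) μ) (h : ℝ) :
    HasOneStepMean μ X (fun z => potential h z)
      (fun z => potential h z - (h - 1 - z) * (h - z)) := by
  unfold potential
  convert! hZ.hasOneStepMean_cubic hp hlaw (-1 / 9) (h / 2 + 1 / 3) (4 / 9 - h / 2 - h ^ 2) 0
    using 2 <;> ring

end IsBranchingWithImmigration

end CriticalGeometric

section HittingTime

variable {Ω : Type*} [MeasurableSpace Ω] {μ : Measure Ω} {X : ℕ → ℕ → Ω → ℕ} {k h : ℕ}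
  {Z : ℕ → Ω → ℕ} {p : unitInterval}

theorem ae_exists_le_of_summable_frozenAt_lt [IsFiniteMeasure μ]
    (hsum : Summable fun n => μ.real {ω | frozenAt h Z n ω < h}) : ∀ᵐ ω ∂μ, ∃ t, h ≤ Z t ω := by
  have hfin : ∑' n, μ {ω | frozenAt h Z n ω < h} ≠ ⊤ := by
    simpa using hsum.tsum_ofReal_ne_top
  filter_upwards [ae_eventually_notMem hfin] with ω hω
  obtain ⟨n, hn⟩ := hω.exists
  by_contra! hlt
  exact hn (frozenAt_lt_iff.2 fun m _ => hlt m)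

namespace IsBranchingWithImmigration

variable [IsProbabilityMeasure μ]

theorem hasSum_setIntegral_frozenAt (hZ : IsBranchingWithImmigration μ X k Z)
    {φ ψ b b' : ℕ → ℝ} (hφ : HasOneStepMean μ X φ ψ) (hb : HasOneStepMean μ X b b')
    (hφb : ∀ z, |φ z| ≤ b z) (hsum : Summable fun n => μ.real {ω | frozenAt h Z n ω < h}) :
    HasSum (fun n => ∫ ω in {ω | frozenAt h Z n ω < h}, ψ (frozenAt h Z n ω) ∂μ)
      (∫ ω, ∑ t ∈ Finset.Icc 1 (sInf {t | h ≤ Z t ω}), φ (Z t ω) ∂μ) := by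
  have hmeas := hZ.measurableSet_frozenAt_lt h
  have hφ_step := hZ.integrableOn_and_setIntegral_frozenAt_succ hφ h
  have hb_step := hZ.integrableOn_and_setIntegral_frozenAt_succ hb h
  obtain ⟨C, hC⟩ := ((Set.finite_Iio h).image b').bddAbove
  have hb'_le (n : ℕ) : ∫ ω in {ω | frozenAt h Z n ω < h}, b' (frozenAt h Z n ω) ∂μ ≤
      C * μ.real {ω | frozenAt h Z n ω < h} := by
    rw [mul_comm, ← smul_eq_mul, ← setIntegral_const]
    exact setIntegral_mono_on (hZ.integrableOn_frozenAt_lt b' h n) integrableOn_const (hmeas n)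
      fun ω hω => hC ⟨_, hω, rfl⟩
  let F (n : ℕ) : Ω → ℝ :=
    {ω | frozenAt h Z n ω < h}.indicator fun ω => φ (frozenAt h Z (n + 1) ω)
  have hF_norm (n : ℕ) : ∫ ω, ‖F n ω‖ ∂μ ≤ C * μ.real {ω | frozenAt h Z n ω < h} :=
    calc ∫ ω, ‖F n ω‖ ∂μ
        = ∫ ω in {ω | frozenAt h Z n ω < h}, |φ (frozenAt h Z (n + 1) ω)| ∂μ := by
          simp only [F, norm_indicator_eq_indicator_norm, integral_indicator (hmeas n),
            Real.norm_eq_abs]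
      _ ≤ ∫ ω in {ω | frozenAt h Z n ω < h}, b (frozenAt h Z (n + 1) ω) ∂μ :=
          integral_mono (hφ_step n).1.abs (hb_step n).1 fun ω => hφb _
      _ ≤ C * μ.real {ω | frozenAt h Z n ω < h} := (hb_step n).2.trans_le (hb'_le n)
  have hF := hasSum_integral_of_summable_integral_norm (F := F)
    (fun n => (hφ_step n).1.integrable_indicator (hmeas n))
    (.of_nonneg_of_le (fun n => integral_nonneg fun ω => norm_nonneg _) hF_norm (hsum.mul_left C))
  convert! hF using 1
  · ext n
    rw [integral_indicator (hmeas n), (hφ_step n).2]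
  · refine integral_congr_ae ?_
    filter_upwards [ae_exists_le_of_summable_frozenAt_lt hsum] with ω hω
    exact (tsum_frozenAt_eq_sum_Icc φ hω).symm

theorem summable_measureReal_frozenAt_lt (hZ : IsBranchingWithImmigration μ X k Z)
    (hp : (p : ℝ) = 1 / 2) (hlaw : ∀ t i, HasLaw (X t i) (geometricMeasure p) μ) (h : ℕ) :
    Summable fun n => μ.real {ω | frozenAt h Z n ω < h} := by
  -- `z² - 4hz` has drift `4z + 3 - 4h`.
  refine summable_of_sum_range_le (fun n => measureReal_nonneg)
    (hZ.sum_measureReal_frozenAt_lt_le (hZ.hasOneStepMean_cubic hp hlaw 0 1 (-4 * h) 0)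
      (m := -4 * h ^ 2) (fun z => ?_) fun z hz => ?_)
  · nlinarith [sq_nonneg ((z : ℝ) - 2 * h)]
  · have : (z : ℝ) + 1 ≤ h := mod_cast hz
    linarith

theorem hasSum_setIntegral_deficit (hZ : IsBranchingWithImmigration μ X k Z)
    (hp : (p : ℝ) = 1 / 2) (hlaw : ∀ t i, HasLaw (X t i) (geometricMeasure p) μ) (h : ℕ) :
    HasSum (fun n => ∫ ω in {ω | frozenAt h Z n ω < h}, ((h : ℝ) - 1 - frozenAt h Z n ω) ∂μ)
      (∫ ω, ∑ t ∈ Finset.Icc 1 (sInf {t | h ≤ Z t ω}), ((h : ℝ) - Z t ω) ∂μ) := by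
  have hφ : HasOneStepMean μ X (fun z => (h : ℝ) - z) (fun z => (h : ℝ) - 1 - z) := by
    convert! hZ.hasOneStepMean_cubic hp hlaw 0 0 (-1) h using 2 <;> ring
  have hb : HasOneStepMean μ X (fun z => (h : ℝ) + z) (fun z => (h : ℝ) + 1 + z) := by
    convert! hZ.hasOneStepMean_cubic hp hlaw 0 0 1 h using 2 <;> ring
  exact hZ.hasSum_setIntegral_frozenAt hφ hb
    (fun z => (abs_sub _ _).trans_eq (by simp)) (hZ.summable_measureReal_frozenAt_lt hp hlaw h)

theorem integral_potential_frozenAt_le (hZ : IsBranchingWithImmigration μ X k Z)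
    (hp : (p : ℝ) = 1 / 2) (hlaw : ∀ t i, HasLaw (X t i) (geometricMeasure p) μ) (hh : 22 ≤ h)
    (n : ℕ) :
    ∫ ω, potential h (frozenAt h Z n ω) ∂μ ≤
      potential h h + h ^ 3 * μ.real {ω | frozenAt h Z n ω < h} := by
  have hh' : (22 : ℝ) ≤ h := mod_cast hh
  have hmeas := hZ.measurableSet_frozenAt_lt h n
  have hind : Integrable ({ω | frozenAt h Z n ω < h}.indicator fun _ => (h : ℝ) ^ 3) μ :=
    (integrable_const _).indicator hmeas
  calc ∫ ω, potential h (frozenAt h Z n ω) ∂μ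
      ≤ ∫ ω, (potential h h +
          {ω | frozenAt h Z n ω < h}.indicator (fun _ => (h : ℝ) ^ 3) ω) ∂μ := by
        refine integral_mono (hZ.integrable_and_integral_frozenAt
          (hZ.hasOneStepMean_potential hp hlaw h) h n).1 ((integrable_const _).add hind)
          fun ω => ?_
        by_cases hω : frozenAt h Z n ω < h
        · have := potential_sub_le (h := h) (Nat.cast_nonneg (frozenAt h Z n ω)) (mod_cast hω.le)
          rw [Set.indicator_of_mem (show ω ∈ {ω | frozenAt h Z n ω < h} from hω)]
          linarith
        · simpa [hω] using potential_le_potential_self hh' (mod_cast not_lt.1 hω)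
    _ = potential h h + h ^ 3 * μ.real {ω | frozenAt h Z n ω < h} := by
        rw [integral_add (integrable_const _) hind, integral_indicator_const _ hmeas]
        simp [mul_comm]

theorem potential_sub_integral_le (hZ : IsBranchingWithImmigration μ X k Z)
    (hp : (p : ℝ) = 1 / 2) (hlaw : ∀ t i, HasLaw (X t i) (geometricMeasure p) μ) (h n : ℕ) :
    potential h k - ∫ ω, potential h (frozenAt h Z n ω) ∂μ ≤ h * ∑ t ∈ Finset.range n,
      ∫ ω in {ω | frozenAt h Z t ω < h}, ((h : ℝ) - 1 - frozenAt h Z t ω) ∂μ := by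
  have hdynkin := (hZ.integrable_and_integral_frozenAt
    (hZ.hasOneStepMean_potential hp hlaw h) h n).2
  rw [hdynkin, sub_add_cancel_left, ← Finset.sum_neg_distrib, Finset.mul_sum]
  refine Finset.sum_le_sum fun t _ => ?_
  rw [← integral_neg, ← integral_const_mul]
  refine setIntegral_mono_on
    (hZ.integrableOn_frozenAt_lt (fun z => -(potential h z - (h - 1 - z) * (h - z) -
      potential h z)) h t)
    (hZ.integrableOn_frozenAt_lt (fun z => (h : ℝ) * (h - 1 - z)) h t)
    (hZ.measurableSet_frozenAt_lt h t) fun ω (hω : frozenAt h Z t ω < h) => ?_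
  have hgap : (frozenAt h Z t ω : ℝ) + 1 ≤ h := mod_cast hω
  have hw : (0 : ℝ) ≤ frozenAt h Z t ω := Nat.cast_nonneg _
  linarith [mul_le_mul_of_nonneg_right (sub_le_self (h : ℝ) hw) (sub_nonneg.2 hgap)]

theorem le_integral_sum_deficit (hZ : IsBranchingWithImmigration μ X k Z)
    (hp : (p : ℝ) = 1 / 2) (hlaw : ∀ t i, HasLaw (X t i) (geometricMeasure p) μ) (hh : 22 ≤ h)
    (hk : k ≤ h) : ((h : ℝ) - k) * (h ^ 2 / 4) ≤
      h * ∫ ω, ∑ t ∈ Finset.Icc 1 (sInf {t | h ≤ Z t ω}), ((h : ℝ) - Z t ω) ∂μ := by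
  have hsurvival :=
    ((hZ.summable_measureReal_frozenAt_lt hp hlaw h).tendsto_atTop_zero.const_mul
      ((h : ℝ) ^ 3)).const_sub (((h : ℝ) - k) * (h ^ 2 / 4))
  rw [mul_zero, sub_zero] at hsurvival
  refine le_of_tendsto_of_tendsto' hsurvival
    ((hZ.hasSum_setIntegral_deficit hp hlaw h).tendsto_sum_nat.const_mul (h : ℝ)) fun n => ?_
  have hstart : ((h : ℝ) - k) * (h ^ 2 / 4) ≤ potential h k - potential h h :=
    sub_mul_le_potential_sub (mod_cast hh) (mod_cast hk)
  linarith [hZ.integral_potential_frozenAt_le hp hlaw hh n,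
    hZ.potential_sub_integral_le hp hlaw h n]

end IsBranchingWithImmigration

end HittingTime

theorem expected_weighted_time_below_h_general
    {Ω : Type*} [MeasurableSpace Ω] (μ : Measure Ω) [IsProbabilityMeasure μ]
    (X : ℕ → ℕ → Ω → ℕ) (hXmeas : ∀ t i, Measurable (X t i))
    (hXindep : iIndepFun (fun p : ℕ × ℕ => X p.1 p.2) μ)
    (hXdist : ∀ t i j, μ {ω | X t i ω = j} = (1 / 2) ^ (j + 1))
    {h k : ℕ} (hh : 22 ≤ h) (hk : k ≤ h) (Z : ℕ → Ω → ℕ) (hZ0 : ∀ ω, Z 0 ω = k)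
    (hZ : ∀ t ω, Z (t + 1) ω = ∑ i ∈ Finset.range (Z t ω + 1), X t i ω)
    (τ : Ω → ℕ) (hτ : ∀ ω, τ ω = sInf {t : ℕ | h ≤ Z t ω}) :
    ((h : ℝ) - k) / 4 ≤ ∫ ω, (∑ t ∈ Finset.Icc 1 (τ ω), ((h : ℝ) - Z t ω) / h) ∂μ := by
  have hchain : IsBranchingWithImmigration μ X k Z := ⟨hXmeas, hXindep, hZ0, hZ⟩
  let half : unitInterval := ⟨1 / 2, by norm_num, by norm_num⟩
  have hlaw (t i : ℕ) : HasLaw (X t i) (geometricMeasure half) μ := by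
    refine hasLaw_geometricMeasure (hXmeas t i) (unitInterval.coe_ne_zero.1 (by norm_num [half]))
      fun j => ?_
    have hhalf : ENNReal.ofReal (1 / 2) = 1 / 2 := by simp
    rw [hXdist, show (1 - (half : ℝ)) ^ j * half = (1 / 2) ^ (j + 1) by norm_num [half, pow_succ],
      ENNReal.ofReal_pow (by norm_num), hhalf]
  have hh0 : (0 : ℝ) < h := by positivity
  have hbound := hchain.le_integral_sum_deficit rfl hlaw hh hk
  simp only [hτ, ← Finset.sum_div, integral_div]
  rw [le_div_iff₀ hh0]
  refine le_of_mul_le_mul_left ?_ hh0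
  linarith

/-- There are `c > 0` and `h₀` such that for all `h ≥ h₀` and all starting
points `k` with `h − 2√h ≤ k ≤ h − √h`, the chain `Z` started at `k` satisfies
`E[Σ_{t=1}^{τ_h} (h − Z_t)/h] ≥ c √h`. -/
theorem expected_weighted_time_below_h
    {Ω : Type*} [MeasurableSpace Ω] (μ : Measure Ω) [IsProbabilityMeasure μ]
    -- i.i.d. offspring variables, geometric with mean 1: P(X_{t,i} = j) = 2^{-j-1}
    (X : ℕ → ℕ → Ω → ℕ) (hXmeas : ∀ t i, Measurable (X t i))
    (hXindep : iIndepFun (fun p : ℕ × ℕ => X p.1 p.2) μ)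
    (hXdist : ∀ t i j, μ {ω | X t i ω = j} = (1 / 2) ^ (j + 1)) :
    ∃ c : ℝ, 0 < c ∧ ∃ h₀ : ℕ, ∀ h : ℕ, h₀ ≤ h →
      ∀ k : ℕ, (h : ℝ) - 2 * Real.sqrt h ≤ (k : ℝ) → (k : ℝ) ≤ (h : ℝ) - Real.sqrt h →
      ∀ Z : ℕ → Ω → ℕ, (∀ ω, Z 0 ω = k) →
        (∀ t ω, Z (t + 1) ω = ∑ i ∈ Finset.range (Z t ω + 1), X t i ω) →
      ∀ τ : Ω → ℕ, (∀ ω, τ ω = sInf {t : ℕ | h ≤ Z t ω}) →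
      c * Real.sqrt h ≤ ∫ ω, (∑ t ∈ Finset.Icc 1 (τ ω), ((h : ℝ) - Z t ω) / h) ∂μ := by
  refine ⟨1 / 4, by norm_num, 22, fun h hh k _ hk Z hZ0 hZ τ hτ => ?_⟩
  have hkh : k ≤ h := by exact_mod_cast hk.trans (sub_le_self _ (Real.sqrt_nonneg h))
  have := expected_weighted_time_below_h_general μ X hXmeas hXindep hXdist hh hkh Z hZ0 hZ τ hτ
  linarith
end

section
/- The process M_t = Σ_{s=1}^t (Z_s − s) − t(Z_t − t), t ∈ ℕ, is a martingale with respect to the natural filtration ℱ_t = σ(Z_0, …, Z_t): for every t, E[M_{t+1} | ℱ_t] = M_t. -/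
open MeasureTheory ProbabilityTheory

/-!
Given the past, `Z_{t+1}` is a sum of `Z_t + 1` variables of mean one that are independent of the
past, so a conditional Wald identity gives `E[Z_{t+1} | ℱ_t] = Z_t + 1`, i.e. `S_t = Z_t - t` is a
martingale.
The increments of `M_t = Σ_{s=1}^t S_s - t S_t` are `M_{t+1} - M_t = -t (S_{t+1} - S_t)`, so `M` is
a martingale transform of `S`.
-/

section GeometricMean

variable {Ω : Type*} {mΩ : MeasurableSpace Ω} {μ : Measure Ω}

lemma hasLaw_of_forall_measure_eq {α : Type*} [MeasurableSpace α] [MeasurableSingletonClass α]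
    [Countable α] {ν : Measure α} {Y : Ω → α} (hY : Measurable Y)
    (h : ∀ a, μ {ω | Y ω = a} = ν {a}) : HasLaw Y ν μ where
  aemeasurable := hY.aemeasurable
  map_eq := Measure.ext_of_singleton fun a => by
    rw [Measure.map_apply hY (measurableSet_singleton a), ← h a]
    rfl

lemma integral_natCast_geometricMeasure {p : unitInterval} (hp : p ≠ 0) :
    ∫ n : ℕ, (n : ℝ) ∂geometricMeasure p = (1 - p) / p := by
  have hp_pos : (0 : ℝ) < p := unitInterval.pos_iff_ne_zero.2 hp
  have hnorm : ‖(1 - p : ℝ)‖ < 1 := by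
    rw [Real.norm_of_nonneg (sub_nonneg.2 p.2.2)]
    linarith
  calc ∫ n : ℕ, (n : ℝ) ∂geometricMeasure p
      = (∑' n : ℕ, (n : ℝ) * (1 - p : ℝ) ^ n) * p := by
        rw [integral_geometricMeasure hp, ← tsum_mul_right]
        exact tsum_congr fun n => by rw [smul_eq_mul]; ring
    _ = (1 - p) / p := by
        rw [tsum_coe_mul_geometric_of_norm_lt_one hnorm, sub_sub_cancel]
        field_simp

lemma integral_natCast_eq_one_of_measure_eq_half_pow {Y : Ω → ℕ} (hY : Measurable Y)
    (h : ∀ j, μ {ω | Y ω = j} = (1 / 2) ^ (j + 1)) : ∫ ω, (Y ω : ℝ) ∂μ = 1 := by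
  let p : unitInterval := ⟨1 / 2, by norm_num, by norm_num⟩
  have hp : p ≠ 0 := fun h0 => by simpa [p] using congrArg Subtype.val h0
  have hlaw : HasLaw Y (geometricMeasure p) μ := hasLaw_of_forall_measure_eq hY fun j => by
    have hreal : (1 - (p : ℝ)) ^ j * p = (1 / 2) ^ (j + 1) := by norm_num [p, pow_succ]
    rw [h, geometricMeasure_singleton hp, hreal, ENNReal.ofReal_pow (by norm_num),
      ENNReal.ofReal_div_of_pos two_pos, ENNReal.ofReal_one, ENNReal.ofReal_ofNat]
  calc ∫ ω, (Y ω : ℝ) ∂μ = ∫ n : ℕ, (n : ℝ) ∂geometricMeasure p :=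
        hlaw.integral_comp .of_discrete
    _ = 1 := by rw [integral_natCast_geometricMeasure hp]; norm_num [p]

end GeometricMean

section RandomSums

variable {Ω : Type*} {G mΩ : MeasurableSpace Ω} {μ : Measure Ω} {N : Ω → ℕ}

lemma measurable_sum_range {β : Type*} [AddCommMonoid β] [MeasurableSpace β] [MeasurableAdd₂ β]
    (hN : Measurable N) {Y : ℕ → Ω → β} (hY : ∀ i, Measurable (Y i)) :
    Measurable fun ω => ∑ i ∈ Finset.range (N ω), Y i ω := by
  have huncurried : Measurable fun q : ℕ × Ω => ∑ i ∈ Finset.range q.1, Y i q.2 :=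
    measurable_from_prod_countable_right fun n =>
      Finset.measurable_fun_sum (Finset.range n) fun i _ => hY i
  exact huncurried.comp (hN.prodMk measurable_id)

variable {E : Type*} [NormedAddCommGroup E] [MeasurableSpace E] [BorelSpace E]

lemma setIntegral_norm_sum_range_le (hN : Measurable N)
    {Y : ℕ → Ω → E} (hY : ∀ i, Integrable (Y i) μ) (hind : ∀ i, IndepFun N (Y i) μ)
    {C : ℝ} (hC : ∀ i, ∫ ω, ‖Y i ω‖ ∂μ ≤ C) (n : ℕ) :
    ∫ ω in {ω | N ω = n}, ‖∑ i ∈ Finset.range (N ω), Y i ω‖ ∂μ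
      ≤ μ.real {ω | N ω = n} * (n * C) := by
  have hs : MeasurableSet {ω | N ω = n} := hN (measurableSet_singleton n)
  have hnorm (i : ℕ) : IntegrableOn (fun ω => ‖Y i ω‖) {ω | N ω = n} μ := (hY i).norm.integrableOn
  calc ∫ ω in {ω | N ω = n}, ‖∑ i ∈ Finset.range (N ω), Y i ω‖ ∂μ
      = ∫ ω in {ω | N ω = n}, ‖∑ i ∈ Finset.range n, Y i ω‖ ∂μ :=
        setIntegral_congr_fun hs fun ω (hω : N ω = n) => by simp only [hω]
    _ ≤ ∫ ω in {ω | N ω = n}, ∑ i ∈ Finset.range n, ‖Y i ω‖ ∂μ :=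
        integral_mono (integrable_finsetSum _ fun i _ => (hY i).integrableOn).norm
          (integrable_finsetSum _ fun i _ => hnorm i) fun ω => norm_sum_le _ _
    _ = ∑ i ∈ Finset.range n, μ.real {ω | N ω = n} * ∫ ω, ‖Y i ω‖ ∂μ := by
        rw [integral_finsetSum _ fun i _ => hnorm i]
        exact Finset.sum_congr rfl fun i _ => Indep.setIntegral_eq_mul hN.comap_le (hind i)
          (hY i).aemeasurable ⟨{n}, measurableSet_singleton n, rfl⟩ (by fun_prop)
    _ ≤ μ.real {ω | N ω = n} * (n * C) := by
        rw [← Finset.mul_sum]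
        gcongr
        simpa using Finset.sum_le_card_nsmul (Finset.range n) _ C fun i _ => hC i

lemma integrable_sum_range_of_indepFun (hN : Measurable N)
    (hNint : Integrable (fun ω => (N ω : ℝ)) μ) {Y : ℕ → Ω → E} (hY : ∀ i, Integrable (Y i) μ)
    (hind : ∀ i, IndepFun N (Y i) μ) {C : ℝ} (hC : ∀ i, ∫ ω, ‖Y i ω‖ ∂μ ≤ C) :
    Integrable (fun ω => ∑ i ∈ Finset.range (N ω), Y i ω) μ := by
  have hs (n : ℕ) : MeasurableSet {ω | N ω = n} := hN (measurableSet_singleton n)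
  have hcover : ⋃ n, {ω | N ω = n} = Set.univ := Set.iUnion_eq_univ_iff.2 fun ω => ⟨N ω, rfl⟩
  have hdisjoint : Pairwise (Function.onFun Disjoint fun n => {ω | N ω = n}) := fun m n hmn =>
    Set.disjoint_left.2 fun ω hm hn => hmn (hm.symm.trans hn)
  have hlocal (n : ℕ) : IntegrableOn (fun ω => ∑ i ∈ Finset.range (N ω), Y i ω) {ω | N ω = n} μ :=
    (integrable_finsetSum (Finset.range n) fun i _ => (hY i).integrableOn).congr <|
      (ae_restrict_iff' (hs n)).2 <| .of_forall fun ω (hω : N ω = n) => by simp only [hω]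
  have hsummable : Summable fun n : ℕ => μ.real {ω | N ω = n} * (n * C) := by
    have hsum := (hasSum_integral_iUnion hs hdisjoint (hNint.mul_const C).integrableOn).summable
    refine hsum.congr fun n => ?_
    calc ∫ ω in {ω | N ω = n}, (N ω : ℝ) * C ∂μ = ∫ _ in {ω | N ω = n}, (n : ℝ) * C ∂μ :=
          setIntegral_congr_fun (hs n) fun ω (hω : N ω = n) => by simp only [hω]
      _ = μ.real {ω | N ω = n} * (n * C) := setIntegral_const _
  rw [← integrableOn_univ, ← hcover]
  exact integrableOn_iUnion_of_summable_integral_norm hlocal <|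
    hsummable.of_nonneg_of_le (fun n => integral_nonneg fun ω => norm_nonneg _)
      (setIntegral_norm_sum_range_le hN hY hind hC)

variable [NormedSpace ℝ E] [CompleteSpace E]

/- On the `G`-measurable event `{N = n}` the random sum coincides with the deterministic one of
length `n`, and conditional expectations given `G` localize to such events. -/
lemma condExp_sum_range_of_indep [SecondCountableTopology E] (hG : G ≤ mΩ)
    [SigmaFinite (μ.trim hG)] (hN : Measurable[G] N) {Y : ℕ → Ω → E}
    (hYmeas : ∀ i, Measurable (Y i)) (hY : ∀ i, Integrable (Y i) μ)
    (hind : ∀ i, Indep G (MeasurableSpace.comap (Y i) inferInstance) μ)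
    (hsum : Integrable (fun ω => ∑ i ∈ Finset.range (N ω), Y i ω) μ) :
    μ[fun ω => ∑ i ∈ Finset.range (N ω), Y i ω|G]
      =ᵐ[μ] fun ω => ∑ i ∈ Finset.range (N ω), ∫ ω', Y i ω' ∂μ := by
  have hterm : ∀ᵐ ω ∂μ, ∀ i, μ[Y i|G] ω = ∫ ω', Y i ω' ∂μ := ae_all_iff.2 fun i =>
    condExp_indep_eq (hYmeas i).comap_le hG (comap_measurable (Y i)).stronglyMeasurable
      (hind i).symm
  have hfixed : ∀ᵐ ω ∂μ, ∀ n, N ω = n → μ[fun ω => ∑ i ∈ Finset.range (N ω), Y i ω|G] ω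
      = μ[∑ i ∈ Finset.range n, Y i|G] ω := ae_all_iff.2 fun n => by
    have hs : MeasurableSet[G] {ω | N ω = n} := hN (measurableSet_singleton n)
    have hfinite : Integrable (∑ i ∈ Finset.range n, Y i) μ :=
      integrable_finsetSum' _ fun i _ => hY i
    have hzero := condExp_ae_eq_restrict_zero (μ := μ) hs
      (f := (fun ω => ∑ i ∈ Finset.range (N ω), Y i ω) - ∑ i ∈ Finset.range n, Y i) <|
      (ae_restrict_iff' (hG _ hs)).2 <| .of_forall fun ω (hω : N ω = n) => by simp [hω]
    filter_upwards [(ae_restrict_iff' (hG _ hs)).1 hzero, condExp_sub hsum hfinite G]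
      with ω hω hsub hn
    rw [hsub] at hω
    exact sub_eq_zero.1 (hω hn)
  have hlinear : ∀ᵐ ω ∂μ, ∀ n, μ[∑ i ∈ Finset.range n, Y i|G] ω
      = (∑ i ∈ Finset.range n, μ[Y i|G]) ω := ae_all_iff.2 fun n =>
    condExp_finsetSum (fun i _ => hY i) G
  filter_upwards [hterm, hfixed, hlinear] with ω hω_term hω_fixed hω_linear
  rw [hω_fixed _ rfl, hω_linear, Finset.sum_apply]
  exact Finset.sum_congr rfl fun i _ => hω_term i

end RandomSums

section MartingaleTransform

variable {Ω : Type*} {mΩ : MeasurableSpace Ω} {μ : Measure Ω} [IsFiniteMeasure μ]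
  {ℱ : Filtration ℕ mΩ} {E : Type*} [NormedAddCommGroup E] [NormedSpace ℝ E] [CompleteSpace E]

lemma martingale_sum_Icc_sub_smul {S : ℕ → Ω → E} (hS : Martingale S ℱ μ) :
    Martingale (fun t => ∑ s ∈ Finset.Icc 1 t, S s - (t : ℝ) • S t) ℱ μ := by
  refine martingale_of_condExp_sub_eq_zero_nat (fun t => ?_) (fun t => ?_) fun t => ?_
  · refine (Finset.stronglyMeasurable_sum _ fun s hs => ?_).sub
      ((hS.stronglyMeasurable t).const_smul _)
    exact hS.stronglyAdapted.stronglyMeasurable_le (Finset.mem_Icc.1 hs).2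
  · exact (integrable_finsetSum' _ fun s _ => hS.integrable s).sub ((hS.integrable t).smul _)
  · have hincrement : (∑ s ∈ Finset.Icc 1 (t + 1), S s - ((t + 1 : ℕ) : ℝ) • S (t + 1))
        - (∑ s ∈ Finset.Icc 1 t, S s - (t : ℝ) • S t) = -(t : ℝ) • (S (t + 1) - S t) := by
      rw [Finset.sum_Icc_succ_top (by lia)]
      push_cast
      module
    rw [hincrement]
    filter_upwards [condExp_smul (μ := μ) (-(t : ℝ)) (S (t + 1) - S t) (ℱ t),
      condExp_sub (hS.integrable (t + 1)) (hS.integrable t) (ℱ t),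
      hS.condExp_ae_eq (Nat.le_add_right t 1), hS.condExp_ae_eq (le_refl t)]
      with ω hsmul hsub hsucc hself
    rw [hsmul, Pi.smul_apply, hsub, Pi.sub_apply, hsucc, hself, sub_self, smul_zero,
      Pi.zero_apply]

end MartingaleTransform

/-- The process `Z` is, relative to the filtration `ℱ`, a branching process with one immigrant per
generation and offspring numbers `X t i` of mean one (criticality). Each offspring variable is only
required to be independent of the past; no joint independence within a generation is imposed. -/
structure IsCriticalBranchingWithImmigration {Ω : Type*} {mΩ : MeasurableSpace Ω}
    (X : ℕ → ℕ → Ω → ℕ) (Z : ℕ → Ω → ℕ) (ℱ : Filtration ℕ mΩ) (μ : Measure Ω) : Prop where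
  measurable_offspring : ∀ t i, Measurable (X t i)
  indep_offspring : ∀ t i, Indep (ℱ t) (MeasurableSpace.comap (X t i) inferInstance) μ
  integral_offspring : ∀ t i, ∫ ω, (X t i ω : ℝ) ∂μ = 1
  adapted : Adapted ℱ Z
  integrable_zero : Integrable (fun ω => (Z 0 ω : ℝ)) μ
  succ_eq : ∀ t ω, Z (t + 1) ω = ∑ i ∈ Finset.range (Z t ω + 1), X t i ω

namespace IsCriticalBranchingWithImmigration

variable {Ω : Type*} {mΩ : MeasurableSpace Ω} {μ : Measure Ω}
  {X : ℕ → ℕ → Ω → ℕ} {Z : ℕ → Ω → ℕ} {ℱ : Filtration ℕ mΩ}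

lemma integrable_offspring (h : IsCriticalBranchingWithImmigration X Z ℱ μ) (t i : ℕ) :
    Integrable (fun ω => (X t i ω : ℝ)) μ :=
  .of_integral_ne_zero (by simp [h.integral_offspring])

lemma indep_natCast_offspring (h : IsCriticalBranchingWithImmigration X Z ℱ μ) (t i : ℕ) :
    Indep (ℱ t) (MeasurableSpace.comap (fun ω => (X t i ω : ℝ)) inferInstance) μ :=
  indep_of_indep_of_le_right (h.indep_offspring t i)
    (Measurable.of_discrete.comp (comap_measurable (X t i))).comap_le

lemma natCast_succ_eq (h : IsCriticalBranchingWithImmigration X Z ℱ μ) (t : ℕ) :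
    (fun ω => (Z (t + 1) ω : ℝ)) = fun ω => ∑ i ∈ Finset.range (Z t ω + 1), (X t i ω : ℝ) :=
  funext fun ω => by rw [h.succ_eq, Nat.cast_sum]

lemma measurable_add_one (h : IsCriticalBranchingWithImmigration X Z ℱ μ) (t : ℕ) :
    Measurable[ℱ t] fun ω => Z t ω + 1 :=
  (h.adapted t).add_const 1

lemma integrable [IsFiniteMeasure μ] (h : IsCriticalBranchingWithImmigration X Z ℱ μ)
    (t : ℕ) : Integrable (fun ω => (Z t ω : ℝ)) μ := by
  induction t with
  | zero => exact h.integrable_zero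
  | succ t ih =>
    rw [h.natCast_succ_eq]
    refine integrable_sum_range_of_indepFun ((h.measurable_add_one t).mono (ℱ.le t) le_rfl)
      (by simpa using ih.add (integrable_const 1)) (h.integrable_offspring t) (fun i => ?_)
      (C := 1) fun i => by simp [h.integral_offspring]
    exact indep_of_indep_of_le_left (h.indep_natCast_offspring t i)
      (h.measurable_add_one t).comap_le

lemma condExp_succ [IsFiniteMeasure μ] (h : IsCriticalBranchingWithImmigration X Z ℱ μ)
    (t : ℕ) : μ[fun ω => (Z (t + 1) ω : ℝ)|ℱ t] =ᵐ[μ] fun ω => (Z t ω : ℝ) + 1 := by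
  have hwald := condExp_sum_range_of_indep (ℱ.le t) (h.measurable_add_one t)
    (fun i => Measurable.of_discrete.comp (h.measurable_offspring t i)) (h.integrable_offspring t)
    (h.indep_natCast_offspring t) (h.natCast_succ_eq t ▸ h.integrable (t + 1))
  simpa [h.natCast_succ_eq, h.integral_offspring] using hwald

lemma martingale_sub_natCast [IsFiniteMeasure μ]
    (h : IsCriticalBranchingWithImmigration X Z ℱ μ) :
    Martingale (fun t ω => (Z t ω : ℝ) - t) ℱ μ := by
  refine martingale_nat (fun t => ?_) (fun t => (h.integrable t).sub (integrable_const _))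
    fun t => ?_
  · exact ((Measurable.of_discrete.comp (h.adapted t)).sub_const _).stronglyMeasurable
  · filter_upwards [condExp_sub (h.integrable (t + 1)) (integrable_const ((t + 1 : ℕ) : ℝ)) (ℱ t),
      h.condExp_succ t] with ω hsub hsucc
    refine .trans ?_ hsub.symm
    rw [Pi.sub_apply, hsucc, condExp_const (ℱ.le t)]
    push_cast
    ring

end IsCriticalBranchingWithImmigration

section NaturalFiltration

variable {Ω : Type*} {mΩ : MeasurableSpace Ω} {μ : Measure Ω}
  {X : ℕ → ℕ → Ω → ℕ} {Z : ℕ → Ω → ℕ}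

lemma measurable_branching_of_measurable_offspring {t : ℕ} (hX : ∀ s < t, ∀ i, Measurable (X s i))
    (hZ0 : Measurable (Z 0))
    (hZrec : ∀ t ω, Z (t + 1) ω = ∑ i ∈ Finset.range (Z t ω + 1), X t i ω) :
    Measurable (Z t) := by
  induction t with
  | zero => exact hZ0
  | succ t ih =>
    rw [funext (hZrec t)]
    exact measurable_sum_range ((ih fun s hs => hX s (by lia)).add_const 1) (hX t t.lt_succ_self)

lemma indep_natural_offspring (hXmeas : ∀ t i, Measurable (X t i))
    (hXindep : iIndepFun (fun p : ℕ × ℕ => X p.1 p.2) μ) {k : ℕ}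
    (hZ : ∀ t, StronglyMeasurable (Z t)) (hZ0 : ∀ ω, Z 0 ω = k)
    (hZrec : ∀ t ω, Z (t + 1) ω = ∑ i ∈ Finset.range (Z t ω + 1), X t i ω) (t i : ℕ) :
    Indep (Filtration.natural Z hZ t) (MeasurableSpace.comap (X t i) inferInstance) μ := by
  let σX (p : ℕ × ℕ) : MeasurableSpace Ω := MeasurableSpace.comap (X p.1 p.2) inferInstance
  let past : MeasurableSpace Ω := ⨆ p ∈ {p : ℕ × ℕ | p.1 < t}, σX p
  have hpast : Indep past (⨆ p ∈ {(t, i)}, σX p) μ :=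
    indep_iSup_of_disjoint (m := σX) (fun p => (hXmeas p.1 p.2).comap_le) hXindep.iIndep (by simp)
  rw [iSup_singleton] at hpast
  have hX_past (r : ℕ) (hr : r < t) (j : ℕ) : Measurable[past] (X r j) :=
    measurable_iff_comap_le.2 (le_iSup₂_of_le (f := fun p _ => σX p) (r, j) hr le_rfl)
  have hZ_zero (m : MeasurableSpace Ω) : Measurable[m] (Z 0) :=
    measurable_const' fun ω ω' => by rw [hZ0, hZ0]
  have hZ_past (s : ℕ) (hs : s ≤ t) : Measurable[past] (Z s) :=
    measurable_branching_of_measurable_offspring (fun r hr => hX_past r (hr.trans_le hs))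
      (hZ_zero _) hZrec
  exact indep_of_indep_of_le_left hpast (iSup₂_le fun s hs => (hZ_past s hs).comap_le)

lemma isCriticalBranchingWithImmigration_natural
    (hXmeas : ∀ t i, Measurable (X t i)) (hXindep : iIndepFun (fun p : ℕ × ℕ => X p.1 p.2) μ)
    (hXmean : ∀ t i, ∫ ω, (X t i ω : ℝ) ∂μ = 1) {k : ℕ}
    (hZ : ∀ t, StronglyMeasurable (Z t)) (hZ0 : ∀ ω, Z 0 ω = k)
    (hZrec : ∀ t ω, Z (t + 1) ω = ∑ i ∈ Finset.range (Z t ω + 1), X t i ω) :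
    IsCriticalBranchingWithImmigration X Z (Filtration.natural Z hZ) μ where
  measurable_offspring := hXmeas
  indep_offspring := indep_natural_offspring hXmeas hXindep hZ hZ0 hZrec
  integral_offspring := hXmean
  adapted := (Filtration.stronglyAdapted_natural hZ).adapted
  integrable_zero := by
    have := hXindep.iIndep.isProbabilityMeasure
    simp only [hZ0, integrable_const]
  succ_eq := hZrec

end NaturalFiltration

theorem M_is_martingale_general {Ω : Type*} {mΩ : MeasurableSpace Ω} {μ : Measure Ω}
    [IsFiniteMeasure μ] {X : ℕ → ℕ → Ω → ℕ} {Z : ℕ → Ω → ℕ} {ℱ : Filtration ℕ mΩ}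
    (h : IsCriticalBranchingWithImmigration X Z ℱ μ) :
    Martingale (fun t ω => ∑ s ∈ Finset.Icc 1 t, ((Z s ω : ℝ) - s) - t * ((Z t ω : ℝ) - t))
      ℱ μ := by
  convert martingale_sum_Icc_sub_smul h.martingale_sub_natCast with t ω
  simp

/-- `M_t = Σ_{s=1}^t (Z_s − s) − t (Z_t − t)` is a martingale for the natural
filtration of `Z`: `E[M_{t+1} | ℱ_t] = M_t` for every `t`. -/
theorem M_is_martingale
    {Ω : Type*} [MeasurableSpace Ω] (μ : Measure Ω) [IsProbabilityMeasure μ]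
    -- i.i.d. offspring variables, geometric with mean 1: P(X_{t,i} = j) = 2^{-j-1}
    (X : ℕ → ℕ → Ω → ℕ) (hXmeas : ∀ t i, Measurable (X t i))
    (hXindep : iIndepFun (fun p : ℕ × ℕ => X p.1 p.2) μ)
    (hXdist : ∀ t i j, μ {ω | X t i ω = j} = (1 / 2) ^ (j + 1))
    -- the critical geometric branching process with one immigrant per generation,
    -- started from k
    (k : ℕ) (Z : ℕ → Ω → ℕ) (hZmeas : ∀ t, Measurable (Z t))
    (hZ0 : ∀ ω, Z 0 ω = k)
    (hZrec : ∀ t ω, Z (t + 1) ω = ∑ i ∈ Finset.range (Z t ω + 1), X t i ω)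
    -- the natural filtration of Z
    (F : ℕ → MeasurableSpace Ω)
    (hF : ∀ t, F t = ⨆ s ∈ Finset.range (t + 1), MeasurableSpace.comap (Z s) ⊤)
    (M : ℕ → Ω → ℝ)
    (hM : ∀ t ω, M t ω =
      (∑ s ∈ Finset.Icc 1 t, ((Z s ω : ℝ) - (s : ℝ))) - (t : ℝ) * ((Z t ω : ℝ) - (t : ℝ))) :
    ∀ t : ℕ, μ[M (t + 1)|F t] =ᵐ[μ] M t := by
  intro t
  have hZ (s : ℕ) : StronglyMeasurable (Z s) := (hZmeas s).stronglyMeasurable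
  have hF_natural : F t = Filtration.natural Z hZ t := by
    simp only [hF, Finset.mem_range, Nat.lt_succ_iff]
    rfl
  have hbranching := isCriticalBranchingWithImmigration_natural hXmeas hXindep
    (fun t i => integral_natCast_eq_one_of_measure_eq_half_pow (hXmeas t i) (hXdist t i))
    hZ hZ0 hZrec
  rw [hF_natural, funext₂ hM]
  exact (M_is_martingale_general hbranching).condExp_ae_eq t.le_succ
end

section
/- (Overshoot bounds) For all integers 0 ≤ k ≤ h ≤ u: (a) for the chain (Y_t) started at Y_0 = k, P(Y_{σ_h} ≥ u | σ_h < ∞) ≤ P(Y_1 ≥ u | Y_0 = h, Y_1 ≥ h); (b) for the chain (Z_t) started at Z_0 = k, P(Z_{τ_h} ≥ u) ≤ P(Z_1 ≥ u | Z_0 = h, Z_1 ≥ h). -/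
open MeasureTheory ProbabilityTheory

/-!
A chain on `ℕ` first enters `[h, ∞)` by a jump from some state `i < h`. For `i ≤ h` the next state
seen from `i` is smaller than the one seen from `h` in the likelihood ratio order, and this order
compares all conditional tails: `ν [u, ∞) / ν [h, ∞) ≤ η [u, ∞) / η [h, ∞)` for `h ≤ u`. Averaging
over the last state before the passage gives the bound for every chain with likelihood ratio
monotone transitions.

The state following `i` is a sum of `i + c` offspring variables. If the offspring law `ρ` is
log-concave, convolution with `ρ` preserves the likelihood ratio order; starting from the fact that
`δ₀` lies below every law on `ℕ`, this makes the convolution powers of `ρ` increasing. Geometric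
laws are log-concave, with equality throughout.
-/

section LikelihoodRatio

/-- The likelihood ratio order on measures on a countable ordered space: the density of `η` with
respect to `ν` is nondecreasing. It is stated in cross-multiplied form, so that no division by
zero occurs. -/
def LikelihoodRatioLE {α : Type*} [MeasurableSpace α] [LE α] (ν η : Measure α) : Prop :=
  ∀ ⦃a b⦄, a ≤ b → ν {b} * η {a} ≤ η {b} * ν {a}

variable {α β : Type*} [MeasurableSpace α] [MeasurableSpace β]

theorem measure_eq_tsum_singleton [Countable α] [DiscreteMeasurableSpace α] (ν : Measure α)
    (s : Set α) : ν s = ∑' x : s, ν {x.1} := by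
  rw [← ν.tsum_indicator_apply_singleton s .of_discrete, tsum_subtype s fun x => ν {x}]

theorem LikelihoodRatioLE.measure_mul_le [LE α] [Countable α] [DiscreteMeasurableSpace α]
    {ν η : Measure α} (hνη : LikelihoodRatioLE ν η) {s t : Set α}
    (hst : ∀ a ∈ s, ∀ b ∈ t, a ≤ b) : ν t * η s ≤ η t * ν s := by
  simp only [measure_eq_tsum_singleton _ s, measure_eq_tsum_singleton _ t,
    ← ENNReal.tsum_mul_right, ← ENNReal.tsum_mul_left]
  exact ENNReal.tsum_le_tsum fun a => ENNReal.tsum_le_tsum fun b => hνη (hst a a.2 b b.2)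

theorem LikelihoodRatioLE.measure_Ici_mul_le [LinearOrder α] [Countable α]
    [DiscreteMeasurableSpace α] {ν η : Measure α} (hνη : LikelihoodRatioLE ν η) {a u : α}
    (hau : a ≤ u) :
    ν (Set.Ici u) * η (Set.Ici a) ≤ η (Set.Ici u) * ν (Set.Ici a) := by
  have split_Ici (m : Measure α) : m (Set.Ici a) = m (Set.Ico a u) + m (Set.Ici u) := by
    rw [← Set.Ico_union_Ici_eq_Ici hau, measure_union _ .of_discrete]
    exact Set.disjoint_left.2 fun x hx hux => hx.2.not_ge hux
  have hlow : ν (Set.Ici u) * η (Set.Ico a u) ≤ η (Set.Ici u) * ν (Set.Ico a u) :=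
    hνη.measure_mul_le fun x hx y hy => hx.2.le.trans hy
  rw [split_Ici ν, split_Ici η, mul_add, mul_add, mul_comm (η (Set.Ici u)) (ν (Set.Ici u))]
  gcongr

/-- `mul_add_mul_le_mul_add_mul` requires cancellative addition, which fails in `ℝ≥0∞`. -/
theorem mul_add_mul_le_mul_add_mul_of_canonicallyOrdered {R : Type*} [CommSemiring R]
    [PartialOrder R] [CanonicallyOrderedAdd R] {p q r s : R} (hpq : p ≤ q) (hrs : r ≤ s) :
    p * s + q * r ≤ p * r + q * s := by
  obtain ⟨d, rfl⟩ := exists_add_of_le hpq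
  obtain ⟨e, rfl⟩ := exists_add_of_le hrs
  calc p * (r + e) + (p + d) * r ≤ p * (r + e) + (p + d) * r + d * e := le_self_add
    _ = p * r + (p + d) * (r + e) := by ring

theorem tsum_tsum_le_of_add_swap_le {ι : Type*} {F G : ι → ι → ENNReal}
    (hFG : ∀ x y, F x y + F y x ≤ G x y + G y x) : ∑' x, ∑' y, F x y ≤ ∑' x, ∑' y, G x y := by
  have tsum_add_swap (H : ι → ι → ENNReal) :
      ∑' x, ∑' y, (H x y + H y x) = 2 * ∑' x, ∑' y, H x y := by
    simp only [ENNReal.tsum_add, two_mul]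
    rw [ENNReal.tsum_comm (f := fun x y => H y x)]
  have hsum := ENNReal.tsum_le_tsum fun x => ENNReal.tsum_le_tsum (hFG x)
  rw [tsum_add_swap, tsum_add_swap] at hsum
  exact (ENNReal.mul_le_mul_iff_right two_ne_zero ENNReal.ofNat_ne_top).1 hsum

theorem bind_apply_singleton [Countable α] [DiscreteMeasurableSpace α] [MeasurableSingletonClass β]
    (ν : Measure α) (κ : α → Measure β) (b : β) : ν.bind κ {b} = ∑' x, κ x {b} * ν {x} := by
  rw [Measure.bind_apply (measurableSet_singleton b) (measurable_of_countable κ).aemeasurable,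
    lintegral_countable']

theorem LikelihoodRatioLE.bind [LinearOrder α] [Countable α] [DiscreteMeasurableSpace α]
    [LE β] [MeasurableSingletonClass β] {ν η : Measure α} (hνη : LikelihoodRatioLE ν η)
    {κ : α → Measure β} (hκ : ∀ x y, x ≤ y → LikelihoodRatioLE (κ x) (κ y)) :
    LikelihoodRatioLE (ν.bind κ) (η.bind κ) := by
  intro a b hab
  simp only [bind_apply_singleton, ← ENNReal.tsum_mul_right, ← ENNReal.tsum_mul_left]
  refine tsum_tsum_le_of_add_swap_le fun x y => ?_
  wlog hxy : x ≤ y generalizing x y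
  · simpa only [add_comm] using this y x (le_of_not_ge hxy)
  have hκxy : κ x {b} * κ y {a} ≤ κ y {b} * κ x {a} := hκ x y hxy hab
  calc κ y {b} * ν {y} * (κ x {a} * η {x}) + κ x {b} * ν {x} * (κ y {a} * η {y})
    _ = κ x {b} * κ y {a} * (η {y} * ν {x}) + κ y {b} * κ x {a} * (ν {y} * η {x}) := by ring
    _ ≤ κ x {b} * κ y {a} * (ν {y} * η {x}) + κ y {b} * κ x {a} * (η {y} * ν {x}) :=
      mul_add_mul_le_mul_add_mul_of_canonicallyOrdered hκxy (hνη hxy)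
    _ = κ y {b} * η {y} * (κ x {a} * ν {x}) + κ x {b} * η {x} * (κ y {a} * ν {y}) := by ring

end LikelihoodRatio

section LogConcave

/-- Log-concavity of a measure on `ℕ`. Comparing all pairs `p + s`, `p + t` instead of only
neighbours excludes internal zeros of the weights. -/
def IsLogConcave (ρ : Measure ℕ) : Prop :=
  ∀ p s t, ρ {p + s + t} * ρ {p} ≤ ρ {p + s} * ρ {p + t}

theorem isLogConcave_geometricMeasure (p : unitInterval) : IsLogConcave (geometricMeasure p) := by
  intro n s t
  rcases eq_or_ne p 0 with rfl | hp
  · rw [geometricMeasure, if_neg (not_not.2 rfl)]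
    cases t <;> simp [← add_assoc]
  · simp only [geometricMeasure_singleton hp]
    rw [← ENNReal.ofReal_mul (geometricMeasure_nonneg p _),
      ← ENNReal.ofReal_mul (geometricMeasure_nonneg p _)]
    exact (congrArg ENNReal.ofReal (by ring)).le

theorem geometricMeasure_Ici_one_ne_zero {p : unitInterval} (hp : p ≠ 0) (hp' : p ≠ 1) :
    geometricMeasure p (Set.Ici 1) ≠ 0 := by
  have hsingleton : geometricMeasure p {1} ≠ 0 := by
    rw [geometricMeasure_singleton hp]
    exact (ENNReal.ofReal_pos.2 (geometricMeasure_pos hp hp' 1)).ne'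
  exact fun hzero =>
    hsingleton (measure_mono_null (Set.singleton_subset_iff.2 Set.self_mem_Ici) hzero)

theorem IsLogConcave.map_add_left {ρ : Measure ℕ} (hρ : IsLogConcave ρ) {x y : ℕ} (hxy : x ≤ y) :
    LikelihoodRatioLE (ρ.map (x + ·)) (ρ.map (y + ·)) := by
  intro a b hab
  simp only [Measure.map_apply (measurable_of_countable _) (measurableSet_singleton _)]
  by_cases hya : y ≤ a
  · have preimage_add {z n : ℕ} (hzn : z ≤ n) : (z + ·) ⁻¹' {n} = ({n - z} : Set ℕ) := by
      ext m
      simp only [Set.mem_preimage, Set.mem_singleton_iff]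
      omega
    rw [preimage_add hya, preimage_add (hya.trans hab), preimage_add (hxy.trans hya),
      preimage_add (hxy.trans (hya.trans hab))]
    have hlog := hρ (a - y) (b - a) (y - x)
    rwa [show a - y + (b - a) + (y - x) = b - x by omega, show a - y + (b - a) = b - y by omega,
      show a - y + (y - x) = a - x by omega] at hlog
  · have hempty : (y + ·) ⁻¹' {a} = (∅ : Set ℕ) := by
      ext m
      simp only [Set.mem_preimage, Set.mem_singleton_iff, Set.mem_empty_iff_false, iff_false]
      omega
    simp only [hempty, measure_empty, mul_zero, zero_le]

theorem conv_eq_bind_map_add_left {M : Type*} [AddMonoid M] [MeasurableSpace M] [MeasurableAdd₂ M]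
    (ν ρ : Measure M) [SFinite ρ] : ν ∗ ρ = ν.bind fun x => ρ.map (x + ·) := by
  ext s hs
  have hmeas : Measurable fun x => ρ.map (x + ·) := by
    refine Measure.measurable_of_measurable_coe _ fun s hs => ?_
    simp only [Measure.map_apply (measurable_const_add _) hs]
    exact measurable_measure_prodMk_left (measurable_add hs)
  rw [Measure.bind_apply hs hmeas.aemeasurable, Measure.conv, Measure.map_apply measurable_add hs,
    Measure.prod_apply (measurable_add hs)]
  simp only [Measure.map_apply (measurable_const_add _) hs]
  rfl

theorem LikelihoodRatioLE.conv {ν η ρ : Measure ℕ} [SFinite ρ] (hνη : LikelihoodRatioLE ν η)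
    (hρ : IsLogConcave ρ) : LikelihoodRatioLE (ν ∗ ρ) (η ∗ ρ) := by
  rw [conv_eq_bind_map_add_left, conv_eq_bind_map_add_left]
  exact hνη.bind fun _ _ => hρ.map_add_left

theorem likelihoodRatioLE_dirac_zero (η : Measure ℕ) : LikelihoodRatioLE (.dirac 0) η := by
  intro a b hab
  rcases b.eq_zero_or_pos with rfl | hb
  · rw [Nat.le_zero.1 hab, mul_comm]
  · simp [hb.ne]

/-- The convolution power `ρ^{∗n}`, the law of a sum of `n` independent variables of law `ρ`. -/
noncomputable def convPow {M : Type*} [AddMonoid M] [MeasurableSpace M] (ρ : Measure M) :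
    ℕ → Measure M
  | 0 => .dirac 0
  | n + 1 => convPow ρ n ∗ ρ

theorem IsLogConcave.convPow_mono {ρ : Measure ℕ} [SFinite ρ] (hρ : IsLogConcave ρ) {m n : ℕ}
    (hmn : m ≤ n) : LikelihoodRatioLE (convPow ρ m) (convPow ρ n) := by
  induction m generalizing n with
  | zero => exact likelihoodRatioLE_dirac_zero _
  | succ m ih =>
    obtain ⟨n, rfl⟩ := Nat.exists_eq_add_of_lt hmn
    exact (ih (by omega)).conv hρ

instance isFiniteMeasure_convPow {M : Type*} [AddMonoid M] [MeasurableSpace M] (ρ : Measure M)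
    [IsFiniteMeasure ρ] (n : ℕ) : IsFiniteMeasure (convPow ρ n) := by
  induction n with
  | zero => exact inferInstanceAs (IsFiniteMeasure (.dirac 0))
  | succ n ih => exact inferInstanceAs (IsFiniteMeasure (convPow ρ n ∗ ρ))

theorem measure_Ici_mul_le_conv (ν ρ : Measure ℕ) [SFinite ρ] (a b : ℕ) :
    ν (Set.Ici a) * ρ (Set.Ici b) ≤ (ν ∗ ρ) (Set.Ici (a + b)) := by
  rw [Measure.conv, Measure.map_apply measurable_add measurableSet_Ici, ← Measure.prod_prod]
  exact measure_mono fun x hx => Nat.add_le_add hx.1 hx.2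

theorem convPow_Ici_ne_zero {ρ : Measure ℕ} [SFinite ρ] (hρ : ρ (Set.Ici 1) ≠ 0) (n : ℕ) :
    convPow ρ n (Set.Ici n) ≠ 0 := by
  induction n with
  | zero => simp [convPow]
  | succ n ih =>
    exact ((mul_ne_zero ih hρ).bot_lt.trans_le (measure_Ici_mul_le_conv _ ρ n 1)).ne'

end LogConcave

section FirstPassage

variable {Ω α : Type*} [LinearOrder α] {W : ℕ → Ω → α} {h u : α}

/-- The first time at which `W` is at least `h`; the junk value `0` if this never happens. -/
noncomputable def firstPassage (W : ℕ → Ω → α) (h : α) (ω : Ω) : ℕ :=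
  sInf {t : ℕ | h ≤ W t ω}

/-- The event that `W` stays below `h` strictly before time `t`. -/
def stayBelow (W : ℕ → Ω → α) (h : α) (t : ℕ) : Set Ω :=
  {ω | ∀ s < t, W s ω < h}

theorem setOf_exists_le_eq (W : ℕ → Ω → α) (h : α) :
    {ω | ∃ t, h ≤ W t ω} = {ω | h ≤ W (firstPassage W h ω) ω} :=
  Set.ext fun ω => ⟨Nat.sInf_mem (s := {t | h ≤ W t ω}), fun hω => ⟨_, hω⟩⟩

theorem setOf_le_firstPassage_eq_iUnion (hhu : h ≤ u) :
    {ω | u ≤ W (firstPassage W h ω) ω} = ⋃ t, stayBelow W h t ∩ {ω | u ≤ W t ω} := by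
  ext ω
  simp only [Set.mem_iUnion]
  constructor
  · exact fun hω => ⟨_, fun s hs => not_le.1 (Nat.notMem_of_lt_sInf hs), hω⟩
  · rintro ⟨t, hbelow, hut⟩
    have hpassage : firstPassage W h ω = t :=
      IsLeast.csInf_eq ⟨hhu.trans hut, fun s hs => not_lt.1 fun hst => hs.not_gt (hbelow s hst)⟩
    rwa [Set.mem_ofPred_eq, hpassage]

theorem pairwise_disjoint_stayBelow_inter (hhu : h ≤ u) :
    Pairwise (Function.onFun Disjoint fun t => stayBelow W h t ∩ {ω | u ≤ W t ω}) := by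
  refine (pairwise_disjoint_on _).2 fun s t hst => Set.disjoint_left.2 ?_
  rintro ω ⟨-, hus⟩ ⟨hbelow, -⟩
  exact (hbelow s hst).not_ge (hhu.trans hus)

end FirstPassage

section MarkovChain

variable {Ω α : Type*} {m : MeasurableSpace Ω} [MeasurableSpace α]

/-- `W` is a Markov chain adapted to the filtration `ℱ` with transition laws `κ i`. Since the state
space is meant to be countable, the Markov property is stated by conditioning on the exact value
of the current state. -/
structure IsMarkovChain (μ : Measure Ω) (ℱ : Filtration ℕ m) (κ : α → Measure α)
    (W : ℕ → Ω → α) : Prop where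
  adapted : ∀ t, Measurable[ℱ t] (W t)
  measure_inter_preimage_succ : ∀ t i A B, MeasurableSet[ℱ t] A → A ⊆ W t ⁻¹' {i} →
    MeasurableSet B → μ (A ∩ W (t + 1) ⁻¹' B) = μ A * κ i B

namespace IsMarkovChain

variable {μ : Measure Ω} {ℱ : Filtration ℕ m} {κ : α → Measure α} {W : ℕ → Ω → α} {h u : α}

theorem measurable (hW : IsMarkovChain μ ℱ κ W) (t : ℕ) : Measurable (W t) :=
  (hW.adapted t).mono (ℱ.le t) le_rfl

variable [LinearOrder α] [DiscreteMeasurableSpace α]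

theorem measurableSet_stayBelow_succ (hW : IsMarkovChain μ ℱ κ W) (h : α) (t : ℕ) :
    MeasurableSet[ℱ t] (stayBelow W h (t + 1)) := by
  have hinter : stayBelow W h (t + 1) = ⋂ s ∈ Finset.range (t + 1), W s ⁻¹' Set.Iio h := by
    ext ω
    simp [stayBelow]
  rw [hinter]
  refine Finset.measurableSet_biInter _ fun s hs => ?_
  exact ℱ.mono (Finset.mem_range_succ_iff.1 hs) _ (hW.adapted s .of_discrete)

theorem measurableSet_stayBelow (hW : IsMarkovChain μ ℱ κ W) (h : α) (t : ℕ) :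
    MeasurableSet (stayBelow W h t) := by
  cases t with
  | zero => simp [stayBelow]
  | succ t => exact ℱ.le t _ (hW.measurableSet_stayBelow_succ h t)

theorem measure_le_firstPassage_eq_tsum (hW : IsMarkovChain μ ℱ κ W) (hhu : h ≤ u) :
    μ {ω | u ≤ W (firstPassage W h ω) ω} = ∑' t, μ (stayBelow W h t ∩ {ω | u ≤ W t ω}) := by
  rw [setOf_le_firstPassage_eq_iUnion hhu,
    measure_iUnion (pairwise_disjoint_stayBelow_inter hhu) fun t =>
      (hW.measurableSet_stayBelow h t).inter (hW.measurable t .of_discrete)]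

variable [Countable α]

theorem measure_stayBelow_succ_inter (hW : IsMarkovChain μ ℱ κ W) (h u : α) (t : ℕ) :
    μ (stayBelow W h (t + 1) ∩ {ω | u ≤ W (t + 1) ω}) =
      ∑' i, μ (stayBelow W h (t + 1) ∩ W t ⁻¹' {i}) * κ i (Set.Ici u) := by
  have hpast (i : α) : MeasurableSet[ℱ t] (stayBelow W h (t + 1) ∩ W t ⁻¹' {i}) :=
    (hW.measurableSet_stayBelow_succ h t).inter (hW.adapted t (measurableSet_singleton i))
  have hlast_state : stayBelow W h (t + 1) ∩ {ω | u ≤ W (t + 1) ω} =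
      ⋃ i, stayBelow W h (t + 1) ∩ W t ⁻¹' {i} ∩ W (t + 1) ⁻¹' Set.Ici u := by
    ext ω
    simp
  rw [hlast_state, measure_iUnion]
  · exact tsum_congr fun i => hW.measure_inter_preimage_succ t i _ _ (hpast i)
      Set.inter_subset_right .of_discrete
  · refine fun i j hij => Set.disjoint_left.2 ?_
    rintro ω ⟨⟨-, hi⟩, -⟩ ⟨⟨-, hj⟩, -⟩
    exact hij (hi.symm.trans hj)
  · exact fun i => (ℱ.le t _ (hpast i)).inter (hW.measurable _ .of_discrete)

theorem measure_stayBelow_inter_mul_le (hW : IsMarkovChain μ ℱ κ W) (h0 : ∀ ω, W 0 ω ≤ h)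
    (hκ : ∀ i < h, LikelihoodRatioLE (κ i) (κ h)) (hhu : h ≤ u) (t : ℕ) :
    μ (stayBelow W h t ∩ {ω | u ≤ W t ω}) * κ h (Set.Ici h) ≤
      κ h (Set.Ici u) * μ (stayBelow W h t ∩ {ω | h ≤ W t ω}) := by
  cases t with
  | zero =>
    rcases hhu.eq_or_lt with rfl | hlt
    · rw [mul_comm]
    · have hempty : {ω | u ≤ W 0 ω} = ∅ :=
        Set.eq_empty_of_forall_notMem fun ω hω => ((h0 ω).trans_lt hlt).not_ge hω
      simp [hempty]
  | succ t =>
    rw [hW.measure_stayBelow_succ_inter, hW.measure_stayBelow_succ_inter,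
      ← ENNReal.tsum_mul_right, ← ENNReal.tsum_mul_left]
    refine ENNReal.tsum_le_tsum fun i => ?_
    rcases lt_or_ge i h with hih | hhi
    · rw [mul_assoc, mul_left_comm (κ h (Set.Ici u))]
      gcongr _ * ?_
      exact (hκ i hih).measure_Ici_mul_le hhu
    · have hempty : stayBelow W h (t + 1) ∩ W t ⁻¹' {i} = ∅ := by
        refine Set.eq_empty_of_forall_notMem fun ω ⟨hbelow, hi⟩ => ?_
        exact (hbelow t t.lt_succ_self).not_ge (hhi.trans_eq hi.symm)
      simp [hempty]

theorem measure_overshoot_mul_le (hW : IsMarkovChain μ ℱ κ W) (h0 : ∀ ω, W 0 ω ≤ h)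
    (hκ : ∀ i < h, LikelihoodRatioLE (κ i) (κ h)) (hhu : h ≤ u) :
    μ {ω | u ≤ W (firstPassage W h ω) ω} * κ h (Set.Ici h) ≤
      κ h (Set.Ici u) * μ {ω | ∃ t, h ≤ W t ω} := by
  rw [setOf_exists_le_eq, hW.measure_le_firstPassage_eq_tsum hhu,
    hW.measure_le_firstPassage_eq_tsum le_rfl, ← ENNReal.tsum_mul_right, ← ENNReal.tsum_mul_left]
  exact ENNReal.tsum_le_tsum (hW.measure_stayBelow_inter_mul_le h0 hκ hhu)

theorem cond_overshoot_le (hW : IsMarkovChain μ ℱ κ W) (h0 : ∀ ω, W 0 ω ≤ h)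
    (hκ : ∀ i < h, LikelihoodRatioLE (κ i) (κ h)) [IsFiniteMeasure (κ h)]
    (hpos : κ h (Set.Ici h) ≠ 0) (hhu : h ≤ u) :
    (μ[|{ω | ∃ t, h ≤ W t ω}]) {ω | u ≤ W (firstPassage W h ω) ω} ≤
      ((κ h)[|Set.Ici h]) (Set.Ici u) := by
  have hpassage : MeasurableSet {ω | ∃ t, h ≤ W t ω} := by
    rw [Set.ofPred_exists]
    exact .iUnion fun t => hW.measurable t .of_discrete
  have hsub : {ω | u ≤ W (firstPassage W h ω) ω} ⊆ {ω | ∃ t, h ≤ W t ω} :=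
    fun ω hω => ⟨_, hhu.trans hω⟩
  rw [cond_apply hpassage, cond_apply .of_discrete, Set.inter_eq_right.2 hsub,
    Set.inter_eq_right.2 (Set.Ici_subset_Ici.2 hhu), mul_comm, mul_comm (κ h _)⁻¹,
    ← div_eq_mul_inv, ← div_eq_mul_inv]
  refine ENNReal.div_le_of_le_mul ?_
  rw [ENNReal.mul_comm_div, ← mul_div_assoc,
    ENNReal.le_div_iff_mul_le (.inl hpos) (.inl (measure_ne_top _ _))]
  exact hW.measure_overshoot_mul_le h0 hκ hhu

end IsMarkovChain

end MarkovChain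

section Branching

theorem map_sum_range_eq_convPow {Ω M : Type*} [MeasurableSpace Ω] [AddCommMonoid M]
    [MeasurableSpace M] [MeasurableAdd₂ M] {μ : Measure Ω} {ξ : ℕ → Ω → M} {ρ : Measure M}
    (hmeas : ∀ i, Measurable (ξ i)) (hindep : iIndepFun ξ μ) (hlaw : ∀ i, μ.map (ξ i) = ρ)
    (n : ℕ) : μ.map (∑ i ∈ Finset.range n, ξ i) = convPow ρ n := by
  have := hindep.isProbabilityMeasure
  induction n with
  | zero =>
    rw [Finset.sum_range_zero, convPow, Pi.zero_def, Measure.map_const, measure_univ, one_smul]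
  | succ n ih =>
    have hind := hindep.indepFun_finsetSum_of_notMem hmeas (Finset.notMem_range_self (n := n))
    rw [Finset.sum_range_succ, hind.map_add_eq_map_conv_map (by fun_prop) (hmeas n), ih, hlaw,
      convPow]

theorem measurable_sum_range_random {Ω M : Type*} {m : MeasurableSpace Ω} [AddCommMonoid M]
    [MeasurableSpace M] [MeasurableAdd₂ M] {N : Ω → ℕ} {ξ : ℕ → Ω → M} (hN : Measurable N)
    (hξ : ∀ i, Measurable (ξ i)) : Measurable fun ω => ∑ i ∈ Finset.range (N ω), ξ i ω := by
  have hpair : Measurable fun p : ℕ × Ω => ∑ i ∈ Finset.range p.1, ξ i p.2 :=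
    measurable_from_prod_countable_right fun n =>
      Finset.measurable_fun_sum (Finset.range n) fun i _ => hξ i
  exact hpair.comp (hN.prodMk measurable_id)

variable {Ω : Type*} [m : MeasurableSpace Ω] {μ : Measure Ω} {ρ : Measure ℕ} {c k h u : ℕ}
  {X : ℕ → ℕ → Ω → ℕ} {W : ℕ → Ω → ℕ}

/-- The σ-algebras generated by the offspring numbers `X s i` of the generations `s < t`. -/
def offspringFiltration (hX : ∀ t i, Measurable (X t i)) : Filtration ℕ m where
  seq t := ⨆ p ∈ {p : ℕ × ℕ | p.1 < t}, MeasurableSpace.comap (X p.1 p.2) ⊤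
  mono' _ _ hst := biSup_mono fun _ hp => hp.trans_le hst
  le' _ := iSup₂_le fun p _ => (hX p.1 p.2).comap_le

/-- `W` is the branching process started at `k` with `c` immigrants per generation and
independent offspring numbers of law `ρ`: `X t i` is the number of children of the `i`-th member
of generation `t`. -/
structure IsBranchingProcess (μ : Measure Ω) (ρ : Measure ℕ) (c k : ℕ) (X : ℕ → ℕ → Ω → ℕ)
    (W : ℕ → Ω → ℕ) : Prop where
  measurable_offspring : ∀ t i, Measurable (X t i)
  iIndepFun_offspring : iIndepFun (fun p : ℕ × ℕ => X p.1 p.2) μ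
  map_offspring : ∀ t i, μ.map (X t i) = ρ
  zero : ∀ ω, W 0 ω = k
  succ : ∀ t ω, W (t + 1) ω = ∑ i ∈ Finset.range (W t ω + c), X t i ω

namespace IsBranchingProcess

theorem isProbabilityMeasure_offspring (hW : IsBranchingProcess μ ρ c k X W) :
    IsProbabilityMeasure ρ := by
  have := hW.iIndepFun_offspring.isProbabilityMeasure
  rw [← hW.map_offspring 0 0]
  exact Measure.isProbabilityMeasure_map (hW.measurable_offspring 0 0).aemeasurable

theorem map_sum_offspring (hW : IsBranchingProcess μ ρ c k X W) (t n : ℕ) :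
    μ.map (fun ω => ∑ i ∈ Finset.range n, X t i ω) = convPow ρ n := by
  have hindep : iIndepFun (X t) μ :=
    hW.iIndepFun_offspring.precomp (g := fun i => (t, i)) (Prod.mk_right_injective t)
  rw [← map_sum_range_eq_convPow (hW.measurable_offspring t) hindep (hW.map_offspring t) n]
  congr 1
  ext ω
  rw [Finset.sum_apply]

theorem adapted (hW : IsBranchingProcess μ ρ c k X W) (t : ℕ) :
    Measurable[offspringFiltration hW.measurable_offspring t] (W t) := by
  induction t with
  | zero => rw [funext hW.zero]; exact measurable_const
  | succ t ih =>
    rw [funext (hW.succ t)]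
    have hpast : Measurable[offspringFiltration hW.measurable_offspring (t + 1)] (W t) :=
      ih.mono ((offspringFiltration hW.measurable_offspring).mono t.le_succ) le_rfl
    refine measurable_sum_range_random ((measurable_of_countable (· + c)).comp hpast) fun i => ?_
    exact measurable_iff_comap_le.2 (le_iSup₂_of_le (t, i) t.lt_succ_self le_rfl)

theorem indep_past_generation (hW : IsBranchingProcess μ ρ c k X W) (t : ℕ) :
    Indep (offspringFiltration hW.measurable_offspring t)
      (⨆ p ∈ {p : ℕ × ℕ | p.1 = t}, MeasurableSpace.comap (X p.1 p.2) ⊤) μ := by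
  have hdisj : Disjoint {p : ℕ × ℕ | p.1 < t} {p : ℕ × ℕ | p.1 = t} :=
    Set.disjoint_left.2 fun p (hlt : p.1 < t) (heq : p.1 = t) => hlt.ne heq
  have hindep := indep_iSup_of_disjoint
    (fun p : ℕ × ℕ => (hW.measurable_offspring p.1 p.2).comap_le) hW.iIndepFun_offspring.iIndep
    hdisj
  exact hindep

theorem indep_past_sum (hW : IsBranchingProcess μ ρ c k X W) (t n : ℕ) :
    Indep (offspringFiltration hW.measurable_offspring t)
      (MeasurableSpace.comap (fun ω => ∑ i ∈ Finset.range n, X t i ω) ⊤) μ := by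
  refine indep_of_indep_of_le_right (hW.indep_past_generation t) (measurable_iff_comap_le.1 ?_)
  exact Finset.measurable_fun_sum _ fun i _ =>
    measurable_iff_comap_le.2 (le_iSup₂_of_le (t, i) rfl le_rfl)

theorem isMarkovChain (hW : IsBranchingProcess μ ρ c k X W) :
    IsMarkovChain μ (offspringFiltration hW.measurable_offspring)
      (fun i => convPow ρ (i + c)) W where
  adapted := hW.adapted
  measure_inter_preimage_succ := by
    intro t i A B hA hAi hB
    have hsucc : A ∩ W (t + 1) ⁻¹' B =
        A ∩ (fun ω => ∑ j ∈ Finset.range (i + c), X t j ω) ⁻¹' B := by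
      ext ω
      refine and_congr_right fun hω => ?_
      rw [Set.mem_preimage, Set.mem_preimage, hW.succ, show W t ω = i from hAi hω]
    rw [hsucc, (Indep_iff _ _ μ).1 (hW.indep_past_sum t (i + c)) A _ hA ⟨B, trivial, rfl⟩,
      ← hW.map_sum_offspring t, Measure.map_apply _ hB]
    exact Finset.measurable_fun_sum _ fun j _ => hW.measurable_offspring t j

end IsBranchingProcess

theorem cond_map_apply {β : Type*} [MeasurableSpace β] {f : Ω → β} (hf : Measurable f)
    {s t : Set β} (hs : MeasurableSet s) (ht : MeasurableSet t) :
    ((μ.map f)[|s]) t = (μ[|f ⁻¹' s]) (f ⁻¹' t) := by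
  rw [cond_apply hs, cond_apply (hf hs), Measure.map_apply hf hs,
    Measure.map_apply hf (hs.inter ht), Set.preimage_inter]

theorem overshoot_bounds_general (hW : IsBranchingProcess μ ρ c k X W) (hρ : IsLogConcave ρ)
    (hρ1 : ρ (Set.Ici 1) ≠ 0) (hkh : k ≤ h) (hhu : h ≤ u) :
    (μ[|{ω | ∃ t, h ≤ W t ω}]) {ω | u ≤ W (firstPassage W h ω) ω} ≤
      (μ[|{ω | h ≤ ∑ i ∈ Finset.range (h + c), X 0 i ω}])
        {ω | u ≤ ∑ i ∈ Finset.range (h + c), X 0 i ω} := by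
  have := hW.isProbabilityMeasure_offspring
  have hpos : convPow ρ (h + c) (Set.Ici h) ≠ 0 := fun hzero =>
    convPow_Ici_ne_zero hρ1 (h + c)
      (measure_mono_null (Set.Ici_subset_Ici.2 (Nat.le_add_right h c)) hzero)
  calc (μ[|{ω | ∃ t, h ≤ W t ω}]) {ω | u ≤ W (firstPassage W h ω) ω}
    _ ≤ ((convPow ρ (h + c))[|Set.Ici h]) (Set.Ici u) :=
      hW.isMarkovChain.cond_overshoot_le (fun ω => (hW.zero ω).trans_le hkh)
        (fun i hih => hρ.convPow_mono (Nat.add_le_add_right hih.le c)) hpos hhu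
    _ = _ := by
      rw [← hW.map_sum_offspring 0, cond_map_apply _ .of_discrete .of_discrete]
      · rfl
      · exact Finset.measurable_fun_sum _ fun j _ => hW.measurable_offspring 0 j

end Branching

theorem measure_le_cond_of_subset {Ω : Type*} [MeasurableSpace Ω] {μ : Measure Ω}
    [IsProbabilityMeasure μ] {s t : Set Ω} (hts : t ⊆ s) : μ t ≤ (μ[|s]) t := by
  rw [ProbabilityTheory.cond, Measure.smul_apply, Measure.restrict_eq_self μ hts, smul_eq_mul]
  exact le_mul_of_one_le_left zero_le (ENNReal.one_le_inv.2 prob_le_one)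

/-- The parameter of the geometric law with weights `2 ^ (-j - 1)`. -/
noncomputable def oneHalf : unitInterval := ⟨1 / 2, by norm_num, by norm_num⟩

theorem oneHalf_ne_zero : oneHalf ≠ 0 :=
  Subtype.coe_ne_coe.1 (by norm_num [oneHalf])

theorem oneHalf_ne_one : oneHalf ≠ 1 :=
  Subtype.coe_ne_coe.1 (by norm_num [oneHalf])

theorem map_eq_geometricMeasure_oneHalf {Ω : Type*} [MeasurableSpace Ω] {μ : Measure Ω} {ξ : Ω → ℕ}
    (hξ : Measurable ξ) (hlaw : ∀ j, μ {ω | ξ ω = j} = (1 / 2) ^ (j + 1)) :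
    μ.map ξ = geometricMeasure oneHalf := by
  refine Measure.ext_of_singleton fun j => ?_
  rw [Measure.map_apply hξ (measurableSet_singleton j), geometricMeasure_singleton oneHalf_ne_zero]
  calc μ {ω | ξ ω = j} = (1 / 2) ^ (j + 1) := hlaw j
    _ = ENNReal.ofReal ((1 / 2) ^ (j + 1)) := by
      rw [ENNReal.ofReal_pow (by norm_num), ENNReal.ofReal_div_of_pos two_pos,
        ENNReal.ofReal_one, ENNReal.ofReal_ofNat]
    _ = ENNReal.ofReal ((1 - oneHalf) ^ j * oneHalf) := by
      congr 1
      norm_num [oneHalf, pow_succ]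

/-- **overshoot bounds.** For all integers `0 ≤ k ≤ h ≤ u`:
(a) for the critical geometric Galton–Watson chain `Y` started at `k`,
`P(Y_{σ_h} ≥ u | σ_h < ∞) ≤ P(Y_1 ≥ u | Y_0 = h, Y_1 ≥ h)`;
(b) for the chain `Z` with one immigrant per generation started at `k`,
`P(Z_{τ_h} ≥ u) ≤ P(Z_1 ≥ u | Z_0 = h, Z_1 ≥ h)`.
Here `Y_1` given `Y_0 = h` is represented by `∑_{i<h} XY_{0,i}` and `Z_1` given `Z_0 = h`
is represented by `∑_{i<h+1} XZ_{0,i}`. -/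
theorem overshoot_bounds
    {Ω : Type*} [MeasurableSpace Ω] (μ : Measure Ω) [IsProbabilityMeasure μ]
    -- i.i.d. offspring variables, geometric with mean 1: P(X_{t,i} = j) = 2^{-j-1}
    (XY XZ : ℕ → ℕ → Ω → ℕ)
    (hXYmeas : ∀ t i, Measurable (XY t i)) (hXZmeas : ∀ t i, Measurable (XZ t i))
    (hXYindep : iIndepFun (fun p : ℕ × ℕ => XY p.1 p.2) μ)
    (hXZindep : iIndepFun (fun p : ℕ × ℕ => XZ p.1 p.2) μ)
    (hXYdist : ∀ t i j, μ {ω | XY t i ω = j} = (1 / 2) ^ (j + 1))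
    (hXZdist : ∀ t i j, μ {ω | XZ t i ω = j} = (1 / 2) ^ (j + 1))
    (k h u : ℕ) (hkh : k ≤ h) (hhu : h ≤ u)
    -- the critical Galton–Watson chain Y started at k, with hitting time σ_h of [h, ∞)
    (Y : ℕ → Ω → ℕ) (hY0 : ∀ ω, Y 0 ω = k)
    (hYrec : ∀ t ω, Y (t + 1) ω = ∑ i ∈ Finset.range (Y t ω), XY t i ω)
    (σ : Ω → ℕ) (hσ : ∀ ω, σ ω = sInf {t : ℕ | h ≤ Y t ω})
    -- the chain Z with one immigrant per generation started at k, with hitting time τ_h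
    (Z : ℕ → Ω → ℕ) (hZ0 : ∀ ω, Z 0 ω = k)
    (hZrec : ∀ t ω, Z (t + 1) ω = ∑ i ∈ Finset.range (Z t ω + 1), XZ t i ω)
    (τ : Ω → ℕ) (hτ : ∀ ω, τ ω = sInf {t : ℕ | h ≤ Z t ω}) :
    (μ[|{ω | ∃ t, h ≤ Y t ω}]) {ω | u ≤ Y (σ ω) ω} ≤
      (μ[|{ω | h ≤ ∑ i ∈ Finset.range h, XY 0 i ω}])
        {ω | u ≤ ∑ i ∈ Finset.range h, XY 0 i ω} ∧
    μ {ω | u ≤ Z (τ ω) ω} ≤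
      (μ[|{ω | h ≤ ∑ i ∈ Finset.range (h + 1), XZ 0 i ω}])
        {ω | u ≤ ∑ i ∈ Finset.range (h + 1), XZ 0 i ω} := by
  obtain rfl : σ = firstPassage Y h := funext hσ
  obtain rfl : τ = firstPassage Z h := funext hτ
  have hY : IsBranchingProcess μ (geometricMeasure oneHalf) 0 k XY Y :=
    ⟨hXYmeas, hXYindep, fun t i => map_eq_geometricMeasure_oneHalf (hXYmeas t i) (hXYdist t i),
      hY0, hYrec⟩
  have hZ : IsBranchingProcess μ (geometricMeasure oneHalf) 1 k XZ Z :=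
    ⟨hXZmeas, hXZindep, fun t i => map_eq_geometricMeasure_oneHalf (hXZmeas t i) (hXZdist t i),
      hZ0, hZrec⟩
  have hlog := isLogConcave_geometricMeasure oneHalf
  have hpos := geometricMeasure_Ici_one_ne_zero oneHalf_ne_zero oneHalf_ne_one
  have hsub : {ω | u ≤ Z (firstPassage Z h ω) ω} ⊆ {ω | ∃ t, h ≤ Z t ω} :=
    fun ω hω => ⟨_, hhu.trans hω⟩
  have hYle := overshoot_bounds_general hY hlog hpos hkh hhu
  have hZle := overshoot_bounds_general hZ hlog hpos hkh hhu
  exact ⟨hYle, (measure_le_cond_of_subset hsub).trans hZle⟩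
end

section
/- For every t ∈ ℕ and every x ∈ ℤ, the local time satisfies the deterministic pathwise identities L(t,x) = D(t,x) + D(t,x−1) + 1_{0 < x ≤ S_t} − 1_{S_t < x ≤ 0} and L(t,x) = U(t,x) + U(t,x+1) + 1_{S_t ≤ x < 0} − 1_{0 ≤ x < S_t}. These identities hold for every nearest-neighbour path (S_k)_{0≤k≤t} on ℤ with S_0 = 0 and |S_k − S_{k−1}| = 1 for all k. -/
/-!
Every step into `x` comes from `x - 1` or from `x + 1`, so `L(t,x) = U(t,x) + D(t,x)`. The net
number of crossings of the edge `{x, x + 1}` telescopes to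
`U(t,x+1) - D(t,x) = 1_{x < S_t} - 1_{x < S_0}`. Eliminating `U(t,x)`, respectively `D(t,x)`, gives
the two identities.
-/

theorem sum_Icc_one_sub_pred {M : Type*} [AddCommGroup M] (f : ℕ → M) (n : ℕ) :
    ∑ k ∈ Finset.Icc 1 n, (f k - f (k - 1)) = f n - f 0 :=
  Finset.sum_Ico_sub (fun k => f (k - 1)) (Nat.le_add_left 1 n)

section Crossings

variable (S : ℕ → ℤ) (t : ℕ) (x : ℤ)

/-- The local time `L(t,x)` of the path `S`. The starting point `S 0` is not counted. -/
def localTime : ℕ := ((Finset.Icc 1 t).filter fun k => S k = x).card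

/-- The number `U(t,x)` of steps of `S` from `x - 1` to `x`; the index is the endpoint. -/
def upcrossings : ℕ := ((Finset.Icc 1 t).filter fun k => S k = x ∧ S (k - 1) = x - 1).card

/-- The number `D(t,x)` of steps of `S` from `x + 1` to `x`; the index is the endpoint. -/
def downcrossings : ℕ := ((Finset.Icc 1 t).filter fun k => S k = x ∧ S (k - 1) = x + 1).card

variable {S t}

theorem localTime_eq_upcrossings_add_downcrossings
    (hS : ∀ k ∈ Finset.Icc 1 t, |S k - S (k - 1)| = 1) :
    localTime S t x = upcrossings S t x + downcrossings S t x := by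
  simp only [localTime, upcrossings, downcrossings, Finset.card_filter, ← Finset.sum_add_distrib]
  refine Finset.sum_congr rfl fun k hk => ?_
  have step : S k - S (k - 1) = 1 ∨ S k - S (k - 1) = -1 := (abs_eq zero_le_one).1 (hS k hk)
  split_ifs <;> omega

theorem upcrossings_add_one_sub_downcrossings
    (hS : ∀ k ∈ Finset.Icc 1 t, |S k - S (k - 1)| ≤ 1) :
    (upcrossings S t (x + 1) : ℤ) - downcrossings S t x =
      (if x < S t then 1 else 0) - (if x < S 0 then 1 else 0) := by
  rw [← sum_Icc_one_sub_pred (fun k => if x < S k then (1 : ℤ) else 0)]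
  simp only [upcrossings, downcrossings, Finset.card_filter, Nat.cast_sum,
    ← Finset.sum_sub_distrib]
  refine Finset.sum_congr rfl fun k hk => ?_
  have step : -1 ≤ S k - S (k - 1) ∧ S k - S (k - 1) ≤ 1 := abs_le.1 (hS k hk)
  split_ifs <;> omega

theorem local_time_crossing_identities_general
    (hS : ∀ k ∈ Finset.Icc 1 t, |S k - S (k - 1)| = 1) :
    (localTime S t x : ℤ) = downcrossings S t x + downcrossings S t (x - 1)
        + (if S 0 < x ∧ x ≤ S t then 1 else 0) - (if S t < x ∧ x ≤ S 0 then 1 else 0) ∧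
    (localTime S t x : ℤ) = upcrossings S t x + upcrossings S t (x + 1)
        + (if S t ≤ x ∧ x < S 0 then 1 else 0) - (if S 0 ≤ x ∧ x < S t then 1 else 0) := by
  have net_crossings y := upcrossings_add_one_sub_downcrossings y fun k hk => (hS k hk).le
  have net_left := net_crossings (x - 1)
  have net_right := net_crossings x
  rw [sub_add_cancel] at net_left
  rw [localTime_eq_upcrossings_add_downcrossings x hS, Nat.cast_add]
  constructor
  · split_ifs at net_left ⊢ <;> omega
  · split_ifs at net_right ⊢ <;> omega

end Crossings

/-- For every nearest-neighbour path `(S_k)_{0 ≤ k ≤ t}` on `ℤ` with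
`S_0 = 0`, the local time satisfies the deterministic pathwise identities
`L(t,x) = D(t,x) + D(t,x−1) + 1_{0 < x ≤ S_t} − 1_{S_t < x ≤ 0}` and
`L(t,x) = U(t,x) + U(t,x+1) + 1_{S_t ≤ x < 0} − 1_{0 ≤ x < S_t}`. -/
theorem local_time_crossing_identities
    (t : ℕ) (S : ℕ → ℤ) (hS0 : S 0 = 0)
    (hstep : ∀ k : ℕ, 1 ≤ k → k ≤ t → S k - S (k - 1) = 1 ∨ S k - S (k - 1) = -1)
    (x : ℤ)
    (L U D : ℤ → ℕ)
    (hL : ∀ y, L y = ((Finset.Icc 1 t).filter fun k => S k = y).card)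
    (hU : ∀ y, U y = ((Finset.Icc 1 t).filter fun k => S k = y ∧ S (k - 1) = y - 1).card)
    (hD : ∀ y, D y = ((Finset.Icc 1 t).filter fun k => S k = y ∧ S (k - 1) = y + 1).card) :
    (L x : ℤ) = (D x : ℤ) + (D (x - 1) : ℤ)
        + (if 0 < x ∧ x ≤ S t then 1 else 0) - (if S t < x ∧ x ≤ 0 then 1 else 0) ∧
    (L x : ℤ) = (U x : ℤ) + (U (x + 1) : ℤ)
        + (if S t ≤ x ∧ x < 0 then 1 else 0) - (if 0 ≤ x ∧ x < S t then 1 else 0) := by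
  have hS : ∀ k ∈ Finset.Icc 1 t, |S k - S (k - 1)| = 1 := fun k hk =>
    (abs_eq zero_le_one).2 (hstep k (Finset.mem_Icc.1 hk).1 (Finset.mem_Icc.1 hk).2)
  simpa only [localTime, upcrossings, downcrossings, hL, hU, hD, hS0] using
    local_time_crossing_identities_general x hS
end
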